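/- Assume p^2·e_0 − (p+1)·b_2 + (p−1)·b_1 > 0. Then π_0^{−w_j}·Ψ^{(j)}·ρ_r ∈ 𝔒_2 for all 0 ≤ r, j < p^2. -/

import Mathlib

/-- A normalized discrete valuation on a field `K`, recorded as a function
`v : K → ℤ`.  The value of `v` at `0` is irrelevant: all conditions below only
refer to nonzero elements (the convention `v 0 = ∞` being understood). -/
structure IsDiscVal {K : Type*} [Field K] (v : K → ℤ) : Prop where
  map_one : v 1 = 0
  map_mul : ∀ x y : K, x ≠ 0 → y ≠ 0 → v (x * y) = v x + v y
  min_le_add : ∀ x y : K, x ≠ 0 → y ≠ 0 → x + y ≠ 0 → min (v x) (v y) ≤ v (x + y)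
  exists_uniformizer : ∃ π : K, π ≠ 0 ∧ v π = 1

/-!
Put `X = x₂ - μ * x₁`. The `p ^ 2` elements `x₁ ^ j * X.choose i` with `i, j < p` have valuations
`-j * p * b₁ - i * b₂`, which are pairwise incongruent modulo `p ^ 2`, so the amount by which a
linear operator raises valuations can be read off these elements. The automorphism `σ ^ p` fixes
`x₁` and sends `X` to nearly `X + 1`; hence `Ψ₂ = σ ^ p - 1` acts on them as the difference
operator, and raises valuations by `b₂`. As `σ X` is nearly `X - μ`, Vandermonde's identity shows
that the truncated binomial power `(1 + Ψ₂) ^ [μ]` compensates the effect of `σ` on `X`; so `Ψ₁`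
acts on `x₁` alone, up to small errors, and raises valuations by `p * b₁`.

Up to small errors, the relation `(1 + Ψ₂) ^ p = 1` gives `Ψ₂ ^ p = 0`, and `σ ^ p = 1 + Ψ₂` gives
`Ψ₁ ^ p = Ψ₂`; when `p * m ≤ e`, the latter error raises valuations at least as much as `Ψ₂`.
If `j + r < p ^ 2`, then `Ψ^(j) Ψ^(r)` therefore raises valuations as much as `Ψ^(j + r)`, a carry
`Ψ₁ ^ p` being traded for one `Ψ₂`. If `j + r ≥ p ^ 2`, the product contains `Ψ₂ ^ p` or
`Ψ₂ ^ (p - 1) * Ψ₁ ^ p` and gains an extra `p ^ 2`, which covers the loss in the floors defining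
the `d_a`.
-/

open Finset

section Algebra

variable {K : Type*} [Field K] [CharZero K]

lemma ringChoose_eq_prod_div_factorial (x : K) (n : ℕ) :
    Ring.choose x n = (∏ k ∈ range n, (x - (k : K))) / (n.factorial : K) := by
  rw [Ring.choose_eq_smul, ← descPochhammer_eval_eq_prod_range, ← Polynomial.aeval_eq_smeval,
    Polynomial.aeval_def, ← Polynomial.eval_map, descPochhammer_map, smul_eq_mul, inv_mul_eq_div]

lemma ringChoose_succ (x : K) (n : ℕ) :
    Ring.choose x (n + 1) = Ring.choose x n * (x - n) * ((n + 1 : ℕ) : K)⁻¹ := by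
  simp only [ringChoose_eq_prod_div_factorial, prod_range_succ, Nat.factorial_succ]
  push_cast
  field_simp

lemma ringChoose_add (x y : K) (n : ℕ) :
    Ring.choose (x + y) n = ∑ i ∈ range (n + 1), Ring.choose x i * Ring.choose y (n - i) := by
  rw [Ring.add_choose_eq n (Commute.all x y), Nat.sum_antidiagonal_eq_sum_range_succ
    (fun i j => Ring.choose x i * Ring.choose y j)]

/-- The polynomial `D(x, y) = (x ^ p + y ^ p - (x + y) ^ p) / p` giving the second component of a
sum of Witt vectors of length two. -/
def wittD {K : Type*} [Field K] (p : ℕ) (x y : K) : K := (x ^ p + y ^ p - (x + y) ^ p) / p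

lemma map_wittD {K L F : Type*} [Field K] [Field L] [FunLike F K L] [RingHomClass F K L] (f : F)
    (p : ℕ) (x y : K) : f (wittD p x y) = wittD p (f x) (f y) := by
  simp [wittD]

variable {p : ℕ}

lemma add_pow_eq_sub_wittD (hp : p ≠ 0) (x y : K) :
    (x + y) ^ p = x ^ p + y ^ p - p * wittD p x y := by
  have hp0 : (p : K) ≠ 0 := Nat.cast_ne_zero.2 hp
  rw [wittD]
  field_simp
  ring

lemma wittD_eq_neg_sum (hp : p.Prime) (x y : K) :
    wittD p x y = -∑ k ∈ Ioo 0 p, x ^ k * y ^ (p - k) * ((p.choose k / p : ℕ) : K) := by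
  have hp0 : (p : K) ≠ 0 := Nat.cast_ne_zero.2 hp.ne_zero
  rw [wittD, add_pow_prime_eq' hp]
  field_simp
  ring

end Algebra

namespace IsDiscVal

section Filtration

variable {K : Type*} [Field K] {v : K → ℤ} {m n k : ℤ} {x y : K}

lemma map_neg (hv : IsDiscVal v) (hx : x ≠ 0) : v (-x) = v x := by
  have h := hv.map_mul (-1) (-1) (by simp) (by simp)
  rw [neg_one_mul, neg_neg, hv.map_one] at h
  rw [← neg_one_mul, hv.map_mul _ _ (by simp) hx]
  omega

lemma map_pow (hv : IsDiscVal v) (hx : x ≠ 0) (i : ℕ) : v (x ^ i) = i * v x := by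
  induction i with
  | zero => simp [hv.map_one]
  | succ i ih =>
    rw [pow_succ, hv.map_mul _ _ (pow_ne_zero i hx) hx, ih]
    push_cast
    ring

lemma map_inv (hv : IsDiscVal v) (hx : x ≠ 0) : v x⁻¹ = -v x := by
  have h := hv.map_mul x x⁻¹ hx (inv_ne_zero hx)
  rw [mul_inv_cancel₀ hx, hv.map_one] at h
  omega

lemma map_zpow (hv : IsDiscVal v) (hx : x ≠ 0) (n : ℤ) : v (x ^ n) = n * v x := by
  cases n with
  | ofNat n => simpa using hv.map_pow hx n
  | negSucc n =>
    rw [zpow_negSucc, hv.map_inv (pow_ne_zero _ hx), hv.map_pow hx, Int.negSucc_eq]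
    push_cast
    ring

/-- The fractional ideal of elements of valuation at least `n`; membership of `0` is spelled out
because the value `v 0` is junk. -/
def filt (hv : IsDiscVal v) (n : ℤ) : AddSubgroup K where
  carrier := {x | x = 0 ∨ n ≤ v x}
  zero_mem' := Or.inl rfl
  add_mem' := by
    intro x y hx hy
    by_cases hx0 : x = 0
    · simpa [hx0] using hy
    by_cases hy0 : y = 0
    · simpa [hy0] using hx
    by_cases hxy : x + y = 0
    · exact Or.inl hxy
    · exact Or.inr ((le_min (hx.resolve_left hx0) (hy.resolve_left hy0)).trans
        (hv.min_le_add x y hx0 hy0 hxy))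
  neg_mem' := by
    intro x hx
    by_cases hx0 : x = 0
    · exact Or.inl (neg_eq_zero.2 hx0)
    · exact Or.inr ((hx.resolve_left hx0).trans (hv.map_neg hx0).ge)

lemma mem_filt (hv : IsDiscVal v) : x ∈ hv.filt n ↔ x = 0 ∨ n ≤ v x := Iff.rfl

lemma mem_filt_of_le (hv : IsDiscVal v) (h : n ≤ v x) : x ∈ hv.filt n := Or.inr h

lemma mem_filt_iff_le (hv : IsDiscVal v) (hx : x ≠ 0) : x ∈ hv.filt n ↔ n ≤ v x := by
  simp [mem_filt, hx]

lemma filt_mono (hv : IsDiscVal v) (h : m ≤ n) (hx : x ∈ hv.filt n) : x ∈ hv.filt m :=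
  hx.imp_right h.trans

instance gradedMonoid_filt (hv : IsDiscVal v) : SetLike.GradedMonoid hv.filt where
  one_mem := hv.mem_filt_of_le hv.map_one.ge
  mul_mem := by
    intro m n x y hx hy
    by_cases hxy : x * y = 0
    · exact Or.inl hxy
    obtain ⟨hx0, hy0⟩ := mul_ne_zero_iff.1 hxy
    rw [mem_filt_iff_le hv hxy, hv.map_mul x y hx0 hy0]
    exact add_le_add ((hv.mem_filt_iff_le hx0).1 hx) ((hv.mem_filt_iff_le hy0).1 hy)

lemma mul_mem_filt (hv : IsDiscVal v) (hx : x ∈ hv.filt m) (hy : y ∈ hv.filt n)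
    (hk : k ≤ m + n) : x * y ∈ hv.filt k :=
  hv.filt_mono hk (SetLike.mul_mem_graded hx hy)

lemma pow_mem_filt (hv : IsDiscVal v) (hx : x ∈ hv.filt n) (i : ℕ) : x ^ i ∈ hv.filt (i * n) := by
  simpa using SetLike.pow_mem_graded i hx

lemma one_mem_filt (hv : IsDiscVal v) (hn : n ≤ 0) : (1 : K) ∈ hv.filt n :=
  hv.filt_mono hn (SetLike.one_mem_graded hv.filt)

lemma natCast_mem_filt (hv : IsDiscVal v) (hn : n ≤ 0) (i : ℕ) : (i : K) ∈ hv.filt n :=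
  hv.filt_mono hn (SetLike.natCast_mem_graded hv.filt i)

lemma notMem_filt (hv : IsDiscVal v) (hx : x ≠ 0) (h : v x < n) : x ∉ hv.filt n := by
  rwa [hv.mem_filt_iff_le hx, not_le]

lemma eq_zero_of_forall_mem_filt (hv : IsDiscVal v) (h : ∀ n, x ∈ hv.filt n) : x = 0 := by
  by_contra hx
  exact hv.notMem_filt hx (lt_add_one _) (h _)

lemma ne_zero_and_map_eq (hv : IsDiscVal v) (hx : x ∈ hv.filt n) (hx' : x ∉ hv.filt (n + 1)) :
    x ≠ 0 ∧ v x = n := by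
  have hx0 : x ≠ 0 := fun h => hx' (h ▸ zero_mem _)
  rw [hv.mem_filt_iff_le hx0] at hx hx'
  exact ⟨hx0, by omega⟩

lemma ne_zero_and_map_add_eq (hv : IsDiscVal v) (hx : x ≠ 0) (hy : y ∈ hv.filt (v x + 1)) :
    x + y ≠ 0 ∧ v (x + y) = v x := by
  refine hv.ne_zero_and_map_eq
    (add_mem (hv.mem_filt_of_le le_rfl) (hv.filt_mono (by omega) hy)) fun h => ?_
  exact hv.notMem_filt hx (lt_add_one _) (by simpa using sub_mem h hy)

lemma mem_filt_of_forall_succ (hv : IsDiscVal v) (hx : x ∈ hv.filt m)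
    (succ : ∀ k, m ≤ k → k < n → x ∈ hv.filt k → x ∈ hv.filt (k + 1)) : x ∈ hv.filt n := by
  rcases le_total n m with h | h
  · exact hv.filt_mono h hx
  · induction n, h using Int.leInduction with
    | base => exact hx
    | succ n hn ih => exact succ n hn (by omega) (ih fun k hk hkn => succ k hk (by omega))

lemma mem_filt_of_sum_mem_filt (hv : IsDiscVal v) {ι : Type*} {s : Finset ι} {y : ι → K}
    (hinj : Set.InjOn (fun i => v (y i)) {i | i ∈ s ∧ y i ≠ 0}) (h : ∑ i ∈ s, y i ∈ hv.filt n)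
    {i : ι} (hi : i ∈ s) : y i ∈ hv.filt n := by
  classical
  by_contra hin
  have ne_zero : ∀ {j}, y j ∉ hv.filt n → y j ≠ 0 := fun hj h0 => hj (h0 ▸ zero_mem _)
  obtain ⟨j, hj, hmin⟩ := (s.filter fun i => y i ∉ hv.filt n).exists_min_image (fun i => v (y i))
    ⟨i, mem_filter.2 ⟨hi, hin⟩⟩
  obtain ⟨hjs, hjn⟩ := mem_filter.1 hj
  have hlt : v (y j) < n := not_le.1 fun hle => hjn (hv.mem_filt_of_le hle)
  have hrest : ∑ i ∈ s.erase j, y i ∈ hv.filt (v (y j) + 1) := by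
    refine sum_mem fun k hk => ?_
    obtain ⟨hkj, hks⟩ := mem_erase.1 hk
    by_cases hkn : y k ∈ hv.filt n
    · exact hv.filt_mono hlt hkn
    have hne : v (y k) ≠ v (y j) := fun h => hkj (hinj ⟨hks, ne_zero hkn⟩ ⟨hjs, ne_zero hjn⟩ h)
    exact hv.mem_filt_of_le (lt_of_le_of_ne (hmin k (mem_filter.2 ⟨hks, hkn⟩)) hne.symm)
  have hyj := sub_mem (hv.filt_mono hlt h) hrest
  rw [← add_sum_erase s y hjs, add_sub_cancel_right] at hyj
  exact hv.notMem_filt (ne_zero hjn) (lt_add_one _) hyj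

end Filtration

section ResidueCharacteristic

variable {K : Type*} [Field K] {v : K → ℤ} {p : ℕ} {x y : K}

lemma ne_zero_and_map_natCast_eq_zero (hv : IsDiscVal v) (hp : p.Prime) (hp1 : (p : K) ∈ hv.filt 1)
    {k : ℕ} (hk : ¬ p ∣ k) : (k : K) ≠ 0 ∧ v (k : K) = 0 := by
  refine hv.ne_zero_and_map_eq (hv.natCast_mem_filt le_rfl k) fun hk1 => ?_
  obtain ⟨a, b, hab⟩ := Nat.isCoprime_iff_coprime.2 (hp.coprime_iff_not_dvd.2 hk)
  have one_eq : (a : K) * p + b * k = 1 := by exact_mod_cast congrArg (Int.cast (R := K)) hab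
  have one_mem : (1 : K) ∈ hv.filt 1 := one_eq ▸ add_mem
    (hv.mul_mem_filt (SetLike.intCast_mem_graded hv.filt a) hp1 le_rfl)
    (hv.mul_mem_filt (SetLike.intCast_mem_graded hv.filt b) hk1 le_rfl)
  exact hv.notMem_filt one_ne_zero (by simp [hv.map_one]) one_mem

lemma inv_natCast_mem_filt (hv : IsDiscVal v) (hp : p.Prime) (hp1 : (p : K) ∈ hv.filt 1)
    {k : ℕ} (hk : ¬ p ∣ k) : (k : K)⁻¹ ∈ hv.filt 0 := by
  obtain ⟨hk0, hkv⟩ := hv.ne_zero_and_map_natCast_eq_zero hp hp1 hk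
  exact hv.mem_filt_of_le (by rw [hv.map_inv hk0, hkv, neg_zero])

lemma mem_filt_of_pow_sub_mem_filt (hv : IsDiscVal v) {i : ℕ} (hi : 2 ≤ i) {n : ℤ} (hn : n ≤ 0)
    (h : y ^ i - y ∈ hv.filt (i * n)) : y ∈ hv.filt n := by
  by_cases hy : y = 0
  · simp [hy]
  refine hv.mem_filt_of_le ?_
  by_contra! hlt
  obtain ⟨h0, hval⟩ := hv.ne_zero_and_map_add_eq (pow_ne_zero i hy) (y := -y)
    (neg_mem (hv.mem_filt_of_le (by rw [hv.map_pow hy]; nlinarith)))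
  rw [← sub_eq_add_neg] at h0 hval
  rw [hv.mem_filt_iff_le h0, hval, hv.map_pow hy] at h
  nlinarith

lemma ne_zero_and_map_eq_of_pow_sub (hv : IsDiscVal v) {i : ℕ} (hi : 2 ≤ i) {n : ℤ} (hn : n < 0)
    (h0 : y ^ i - y ≠ 0) (h : v (y ^ i - y) = i * n) : y ≠ 0 ∧ v y = n := by
  refine hv.ne_zero_and_map_eq
    (hv.mem_filt_of_pow_sub_mem_filt hi hn.le (hv.mem_filt_of_le h.ge)) fun hy => ?_
  exact hv.notMem_filt h0 (n := i * n + 1) (by omega)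
    (sub_mem (hv.filt_mono (by nlinarith) (hv.pow_mem_filt hy i)) (hv.filt_mono (by nlinarith) hy))

end ResidueCharacteristic

section Binomial

variable {K : Type*} [Field K] [CharZero K] {v : K → ℤ} {p n : ℕ} {b c : ℤ} {x y : K}

lemma ringChoose_succ_mem_filt (hv : IsDiscVal v) (hp : p.Prime) (hp1 : (p : K) ∈ hv.filt 1)
    (hb : b ≤ 0) (hbc : b ≤ c) (hx : x ∈ hv.filt c) (hn : n + 1 < p) :
    Ring.choose x (n + 1) ∈ hv.filt (n * b + c) := by
  have hinv : ∀ k < p - 1, (((k + 1 : ℕ) : K))⁻¹ ∈ hv.filt 0 := fun k hk =>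
    hv.inv_natCast_mem_filt hp hp1 (Nat.not_dvd_of_pos_of_lt k.succ_pos (by omega))
  induction n with
  | zero => simpa [Ring.choose_one_right] using hx
  | succ n ih =>
    rw [ringChoose_succ]
    refine hv.mul_mem_filt (hv.mul_mem_filt (ih (by omega)) (n := b) ?_ le_rfl)
      (hinv _ (by omega)) (by push_cast; linarith)
    exact sub_mem (hv.filt_mono hbc hx) (hv.natCast_mem_filt hb _)

lemma ringChoose_mem_filt (hv : IsDiscVal v) (hp : p.Prime) (hp1 : (p : K) ∈ hv.filt 1)
    (hb : b ≤ 0) (hx : x ∈ hv.filt b) (hn : n < p) : Ring.choose x n ∈ hv.filt (n * b) := by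
  cases n with
  | zero => simpa using hv.one_mem_filt le_rfl
  | succ n =>
    exact hv.filt_mono (by push_cast; linarith) (hv.ringChoose_succ_mem_filt hp hp1 hb le_rfl hx hn)

lemma ringChoose_ne_zero_and_map_eq (hv : IsDiscVal v) (hp : p.Prime) (hp1 : (p : K) ∈ hv.filt 1)
    (hx : x ≠ 0) (hxv : v x < 0) (hn : n < p) :
    Ring.choose x n ≠ 0 ∧ v (Ring.choose x n) = n * v x := by
  induction n with
  | zero => simp [hv.map_one]
  | succ n ih =>
    obtain ⟨ih0, ihv⟩ := ih (by omega)
    obtain ⟨hs0, hsv⟩ := hv.ne_zero_and_map_add_eq hx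
      (neg_mem (hv.natCast_mem_filt (n := v x + 1) hxv n))
    obtain ⟨hk0, hkv⟩ := hv.ne_zero_and_map_natCast_eq_zero hp hp1
      (Nat.not_dvd_of_pos_of_lt n.succ_pos hn)
    rw [ringChoose_succ, sub_eq_add_neg]
    refine ⟨mul_ne_zero (mul_ne_zero ih0 hs0) (inv_ne_zero hk0), ?_⟩
    rw [hv.map_mul _ _ (mul_ne_zero ih0 hs0) (inv_ne_zero hk0), hv.map_mul _ _ ih0 hs0, ihv, hsv,
      hv.map_inv hk0, hkv]
    push_cast
    ring

lemma ringChoose_add_sub_mem_filt (hv : IsDiscVal v) (hp : p.Prime) (hp1 : (p : K) ∈ hv.filt 1)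
    (hb : b ≤ 0) (hbc : b ≤ c) (hx : x ∈ hv.filt b) (hy : y ∈ hv.filt c) (hn : n < p) :
    Ring.choose (x + y) n - Ring.choose x n ∈ hv.filt (n * b - b + c) := by
  rw [ringChoose_add, sum_range_succ, Nat.sub_self, Ring.choose_zero_right, mul_one,
    add_sub_cancel_right]
  refine sum_mem fun i hi => ?_
  rw [mem_range] at hi
  obtain ⟨j, rfl⟩ := Nat.exists_eq_add_of_lt hi
  rw [show i + j + 1 - i = j + 1 by omega]
  exact hv.mul_mem_filt (hv.ringChoose_mem_filt hp hp1 hb hx (by omega))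
    (hv.ringChoose_succ_mem_filt hp hp1 hb hbc hy (by omega)) (by push_cast; linarith)

end Binomial

lemma wittD_mem_filt {K : Type*} [Field K] [CharZero K] {v : K → ℤ} (hv : IsDiscVal v) {p : ℕ}
    (hp : p.Prime) {a b c : ℤ} {x y : K} (hx : x ∈ hv.filt a) (hy : y ∈ hv.filt b)
    (h₁ : c ≤ a + (p - 1) * b) (h₂ : c ≤ (p - 1) * a + b) : wittD p x y ∈ hv.filt c := by
  rw [wittD_eq_neg_sum hp]
  refine neg_mem (sum_mem fun k hk => ?_)
  obtain ⟨hk0, hkp⟩ := mem_Ioo.1 hk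
  have hk1 : (1 : ℤ) ≤ k := by omega
  have hk2 : (k : ℤ) + 1 ≤ p := by omega
  refine hv.mul_mem_filt (hv.mul_mem_filt (hv.pow_mem_filt hx k) (hv.pow_mem_filt hy (p - k))
    le_rfl) (hv.natCast_mem_filt le_rfl _) ?_
  rw [Nat.cast_sub hkp.le]
  rcases le_total a b with h | h <;> nlinarith [hk1, hk2]

section Raising

variable {K L : Type*} [Field K] [Field L] [Algebra K L] {v : L → ℤ} {c c' k n : ℤ}
  {S T : Module.End K L} {x : L}

/-- The linear operators that raise valuations by at least `c`. -/
def raising (hv : IsDiscVal v) (c : ℤ) : AddSubgroup (Module.End K L) where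
  carrier := {T | ∀ n, ∀ x ∈ hv.filt n, T x ∈ hv.filt (n + c)}
  zero_mem' := fun _ _ _ => zero_mem _
  add_mem' := fun hS hT n x hx => add_mem (hS n x hx) (hT n x hx)
  neg_mem' := fun hT n x hx => neg_mem (hT n x hx)

lemma apply_mem_filt (hv : IsDiscVal v) (hT : T ∈ hv.raising c) (hx : x ∈ hv.filt n)
    (hk : k ≤ n + c) : T x ∈ hv.filt k := hv.filt_mono hk (hT n x hx)

lemma raising_mono (hv : IsDiscVal v) (h : c' ≤ c) (hT : T ∈ hv.raising c) :
    T ∈ hv.raising c' :=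
  fun _ _ hx => hv.apply_mem_filt hT hx (by omega)

instance gradedMonoid_raising (hv : IsDiscVal v) :
    SetLike.GradedMonoid (hv.raising : ℤ → AddSubgroup (Module.End K L)) where
  one_mem := fun _ _ hx => by simpa using hx
  mul_mem := by
    intro c c' S T hS hT n x hx
    rw [Module.End.mul_apply]
    exact hv.apply_mem_filt hS (hT n x hx) (by omega)

lemma mul_mem_raising (hv : IsDiscVal v) (hS : S ∈ hv.raising c) (hT : T ∈ hv.raising c')
    (hk : k ≤ c + c') : S * T ∈ hv.raising k :=
  hv.raising_mono hk (SetLike.mul_mem_graded hS hT)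

lemma pow_mem_raising (hv : IsDiscVal v) (hT : T ∈ hv.raising c) (i : ℕ) :
    T ^ i ∈ hv.raising (i * c) := by
  simpa using SetLike.pow_mem_graded i hT

lemma smul_mem_raising (hv : IsDiscVal v) {a : K} (ha : algebraMap K L a ∈ hv.filt c)
    (hT : T ∈ hv.raising c') (hk : k ≤ c + c') : a • T ∈ hv.raising k := by
  intro n x hx
  rw [LinearMap.smul_apply, Algebra.smul_def]
  exact hv.mul_mem_filt ha (hT n x hx) (by omega)

lemma natCast_mem_raising (hv : IsDiscVal v) {i : ℕ} (hi : (i : L) ∈ hv.filt c) :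
    (i : Module.End K L) ∈ hv.raising c := by
  intro n x hx
  rw [Module.End.natCast_apply, nsmul_eq_mul]
  exact hv.mul_mem_filt hi hx (by omega)

lemma one_add_pow_prime_sub_mem_raising (hv : IsDiscVal v) {p : ℕ} (hp : p.Prime) {e : ℤ}
    (he : (p : L) ∈ hv.filt e) (hc : 0 ≤ c) (hT : T ∈ hv.raising c) :
    (1 + T) ^ p - 1 - T ^ p ∈ hv.raising (e + c) := by
  rw [(Commute.one_left T).add_pow_prime_eq' hp]
  simp only [one_pow, one_mul, add_sub_right_comm, sub_self, zero_add]
  refine hv.mul_mem_raising (hv.natCast_mem_raising he) (c' := c) (sum_mem fun i hi => ?_) le_rfl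
  obtain ⟨-, hip⟩ := mem_Ioo.1 hi
  refine hv.mul_mem_raising (hv.pow_mem_raising hT _)
    (hv.natCast_mem_raising (hv.natCast_mem_filt le_rfl _)) ?_
  have : (1 : ℤ) ≤ (p - i : ℕ) := by omega
  nlinarith

lemma pow_prime_mem_raising_of_one_add_pow_eq_one (hv : IsDiscVal v) {p : ℕ} (hp : p.Prime)
    {e : ℤ} (he : (p : L) ∈ hv.filt e) (hc : 0 ≤ c) (hT : T ∈ hv.raising c)
    (h1 : (1 + T) ^ p = 1) : T ^ p ∈ hv.raising (e + c) := by
  simpa [h1] using hv.one_add_pow_prime_sub_mem_raising hp he hc hT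

end Raising

end IsDiscVal

section Ramified

variable {K L ι : Type*} [Field K] [Field L] [Algebra K L]

/-- `L / K` is totally ramified, with normalized discrete valuations `vK` and `vL`. -/
structure IsTotallyRamified (vK : K → ℤ) (vL : L → ℤ) : Prop where
  isDiscVal_base : IsDiscVal vK
  isDiscVal : IsDiscVal vL
  map_algebraMap : ∀ x : K, x ≠ 0 → vL (algebraMap K L x) = Module.finrank K L * vK x

/-- A family of `[L : K]` nonzero elements of `L` whose valuations are pairwise incongruent
modulo `[L : K]`. -/
structure IsAdapted (K : Type*) {L ι : Type*} [Field K] [Field L] [Algebra K L] [Fintype ι]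
    (vL : L → ℤ) (f : ι → L) : Prop where
  card_eq : Fintype.card ι = Module.finrank K L
  ne_zero : ∀ i, f i ≠ 0
  eq_of_modEq : ∀ i j, vL (f i) ≡ vL (f j) [ZMOD Module.finrank K L] → i = j

namespace IsTotallyRamified

variable {vK : K → ℤ} {vL : L → ℤ}

lemma map_smul (h : IsTotallyRamified vK vL) {a : K} {x : L} (ha : a ≠ 0) (hx : x ≠ 0) :
    vL (a • x) = Module.finrank K L * vK a + vL x := by
  rw [Algebra.smul_def, h.isDiscVal.map_mul _ _ (by simpa using ha) hx, h.map_algebraMap a ha]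

lemma smul_mem_filt_of_sum (h : IsTotallyRamified vK vL) [Fintype ι] {f : ι → L}
    (hf : IsAdapted K vL f) (a : ι → K) {n : ℤ}
    (ha : ∑ i, a i • f i ∈ h.isDiscVal.filt n) (i : ι) : a i • f i ∈ h.isDiscVal.filt n := by
  refine h.isDiscVal.mem_filt_of_sum_mem_filt ?_ ha (mem_univ i)
  rintro i ⟨-, hi⟩ j ⟨-, hj⟩ hij
  simp only [h.map_smul (left_ne_zero_of_smul hi) (hf.ne_zero i),
    h.map_smul (left_ne_zero_of_smul hj) (hf.ne_zero j)] at hij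
  exact hf.eq_of_modEq i j (Int.modEq_iff_dvd.2 ⟨vK (a i) - vK (a j), by linarith⟩)

variable [FiniteDimensional K L]

lemma exists_eq_sum_smul (h : IsTotallyRamified vK vL) [Fintype ι] {f : ι → L}
    (hf : IsAdapted K vL f) (x : L) : ∃ a : ι → K, x = ∑ i, a i • f i := by
  have hli : LinearIndependent K f := by
    rw [Fintype.linearIndependent_iff]
    intro a ha i
    have : a i • f i = 0 := h.isDiscVal.eq_zero_of_forall_mem_filt fun n =>
      h.smul_mem_filt_of_sum hf a (by simp [ha]) i
    exact (smul_eq_zero.1 this).resolve_right (hf.ne_zero i)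
  have hx : x ∈ Submodule.span K (Set.range f) :=
    hli.span_eq_top_of_card_eq_finrank' hf.card_eq ▸ Submodule.mem_top
  obtain ⟨a, ha⟩ := (Submodule.mem_span_range_iff_exists_fun K).1 hx
  exact ⟨a, ha.symm⟩

lemma mem_raising_of_isAdapted (h : IsTotallyRamified vK vL) [Fintype ι] {f : ι → L}
    (hf : IsAdapted K vL f) {T : Module.End K L} {c : ℤ}
    (hT : ∀ i, T (f i) ∈ h.isDiscVal.filt (vL (f i) + c)) :
    T ∈ h.isDiscVal.raising c := by
  intro n x hx
  obtain ⟨a, rfl⟩ := h.exists_eq_sum_smul hf x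
  rw [map_sum]
  refine sum_mem fun i _ => ?_
  by_cases hai : a i = 0
  · simp [hai]
  have hi := h.smul_mem_filt_of_sum hf a hx i
  rw [h.isDiscVal.mem_filt_iff_le (smul_ne_zero hai (hf.ne_zero i)),
    h.map_smul hai (hf.ne_zero i)] at hi
  rw [_root_.map_smul, Algebra.smul_def]
  exact h.isDiscVal.mul_mem_filt (h.isDiscVal.mem_filt_of_le (h.map_algebraMap _ hai).ge) (hT i)
    (by omega)

lemma exists_mem_raising (h : IsTotallyRamified vK vL) (T : Module.End K L) :
    ∃ c, T ∈ h.isDiscVal.raising c := by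
  obtain ⟨ϖ, hϖ, hϖv⟩ := h.isDiscVal.exists_uniformizer
  have hval (i : ℕ) : vL (ϖ ^ i) = i := by rw [h.isDiscVal.map_pow hϖ, hϖv, mul_one]
  have hadapted : IsAdapted K vL fun i : Fin (Module.finrank K L) => ϖ ^ (i : ℕ) :=
    { card_eq := Fintype.card_fin _
      ne_zero := fun i => pow_ne_zero _ hϖ
      eq_of_modEq := fun i j hij => by
        rw [hval, hval, Int.natCast_modEq_iff] at hij
        exact Fin.ext (hij.eq_of_lt_of_lt i.2 j.2) }
  obtain ⟨c, hc⟩ := (Set.finite_range fun i : Fin (Module.finrank K L) =>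
    vL (T (ϖ ^ (i : ℕ))) - i).bddBelow
  refine ⟨c, h.mem_raising_of_isAdapted hadapted fun i => h.isDiscVal.mem_filt_of_le ?_⟩
  rw [hval, ← le_sub_iff_add_le']
  exact hc (Set.mem_range_self i)

lemma algEquiv_mem_raising_zero (h : IsTotallyRamified vK vL) (τ : L ≃ₐ[K] L) :
    τ.toLinearMap ∈ h.isDiscVal.raising 0 := by
  obtain ⟨c, hc⟩ := h.exists_mem_raising τ.toLinearMap
  intro n x hx
  by_cases hx0 : x = 0
  · simp [hx0]
  have hτx0 : τ x ≠ 0 := by simpa using hx0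
  have hpow (k : ℕ) : k * vL x + c ≤ k * vL (τ x) := by
    have hk := hc (vL (x ^ k)) (x ^ k) (h.isDiscVal.mem_filt_of_le le_rfl)
    rwa [AlgEquiv.toLinearMap_apply, map_pow, h.isDiscVal.mem_filt_iff_le (pow_ne_zero k hτx0),
      h.isDiscVal.map_pow hx0, h.isDiscVal.map_pow hτx0] at hk
  rw [h.isDiscVal.mem_filt_iff_le hx0] at hx
  refine h.isDiscVal.mem_filt_of_le ?_
  by_contra! hlt
  have hk := hpow (c.natAbs + 1)
  push_cast at hk
  rw [AlgEquiv.toLinearMap_apply] at hlt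
  nlinarith [neg_abs_le c, abs_nonneg c]

end IsTotallyRamified

end Ramified

section TruncatedPower

variable {K L : Type*} [Field K] [Field L] [Algebra K L]

/-- The binomial series of `(1 + Ψ) ^ μ`, truncated below degree `p`. -/
noncomputable def truncPow [CharZero K] (p : ℕ) (μ : K) (Ψ : Module.End K L) : Module.End K L :=
  ∑ i ∈ range p, Ring.choose μ i • Ψ ^ i

/-- Up to errors of relative valuation `c`, the operator `Ψ` acts on the binomial coefficients of
`X` as the difference operator. The weight `b` is thought of as `-v X`. -/
structure IsApproxDifference [CharZero L] {v : L → ℤ} (hv : IsDiscVal v) (p : ℕ)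
    (Ψ : Module.End K L) (X : L) (b c : ℤ) : Prop where
  apply_one : Ψ 1 = 0
  apply_choose_sub_mem : ∀ i, i + 1 < p →
    Ψ (Ring.choose X (i + 1)) - Ring.choose X i ∈ hv.filt (-(i * b) + c)

lemma commute_truncPow [CharZero K] {T Ψ : Module.End K L} (h : Commute T Ψ) (p : ℕ) (μ : K) :
    Commute T (truncPow p μ Ψ) :=
  Commute.sum_right _ _ _ fun i _ => (h.pow_right i).smul_right _

namespace IsDiscVal

variable [CharZero L] {v : L → ℤ} {p : ℕ} {b c : ℤ} {X : L}

lemma algebraMap_ringChoose_mem_filt [CharZero K] {μ : K} (hv : IsDiscVal v)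
    (hp : p.Prime) (hp1 : (p : L) ∈ hv.filt 1) (hμ : algebraMap K L μ ∈ hv.filt b)
    (hb : b ≤ 0) {n : ℕ} (hn : n < p) :
    algebraMap K L (Ring.choose μ n) ∈ hv.filt (n * b) := by
  rw [Ring.map_choose]
  exact hv.ringChoose_mem_filt hp hp1 hb hμ hn

lemma isApproxDifference_of_translation (hv : IsDiscVal v) (hp : p.Prime)
    (hp1 : (p : L) ∈ hv.filt 1) (hb : 0 ≤ b) (hc : 0 ≤ c) (hX : X ∈ hv.filt (-b))
    {τ : L ≃ₐ[K] L} (hτ : τ X - X - 1 ∈ hv.filt c) :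
    IsApproxDifference hv p (τ.toLinearMap - 1) X b c where
  apply_one := by simp
  apply_choose_sub_mem := by
    intro i hi
    have hX1 : X + 1 ∈ hv.filt (-b) := add_mem hX (hv.one_mem_filt (by omega))
    have h := hv.ringChoose_add_sub_mem_filt hp hp1 (by omega) (by omega) hX1 hτ hi
    rw [show X + 1 + (τ X - X - 1) = τ X by ring, Ring.choose_succ_succ] at h
    have heq : (τ.toLinearMap - 1) (Ring.choose X (i + 1)) - Ring.choose X i =
        Ring.choose (τ X) (i + 1) - (Ring.choose X i + Ring.choose X (i + 1)) := by
      simp only [LinearMap.sub_apply, AlgEquiv.toLinearMap_apply, Module.End.one_apply,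
        Ring.map_choose]
      ring
    exact heq ▸ hv.filt_mono (by push_cast; linarith) h

end IsDiscVal

namespace IsApproxDifference

variable [CharZero L] {v : L → ℤ} {hv : IsDiscVal v} {p i n : ℕ} {b c : ℤ} {X : L}
  {Ψ : Module.End K L}

lemma apply_choose_mem (h : IsApproxDifference hv p Ψ X b c) (hp : p.Prime)
    (hp1 : (p : L) ∈ hv.filt 1) (hb : 0 ≤ b) (hc : 0 ≤ c) (hX : X ∈ hv.filt (-b)) (hi : i < p) :
    Ψ (Ring.choose X i) ∈ hv.filt (-(i * b) + b) := by
  cases i with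
  | zero => simp [h.apply_one]
  | succ i =>
    have hchoose := hv.ringChoose_mem_filt hp hp1 (by omega) hX (Nat.lt_of_succ_lt hi)
    rw [← sub_add_cancel (Ψ _) (Ring.choose X i)]
    exact add_mem (hv.filt_mono (by push_cast; linarith) (h.apply_choose_sub_mem i hi))
      (hv.filt_mono (by push_cast; linarith) hchoose)

lemma pow_apply_choose_sub_mem (h : IsApproxDifference hv p Ψ X b c) (hΨ : Ψ ∈ hv.raising b)
    (hi : i + n < p) :
    (Ψ ^ n) (Ring.choose X (i + n)) - Ring.choose X i ∈ hv.filt (-(i * b) + c) := by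
  induction n generalizing i with
  | zero => simp
  | succ n ih =>
    have h₁ := hv.apply_mem_filt hΨ (ih (i := i + 1) (by omega)) (k := -(i * b) + c)
      (by push_cast; linarith)
    rw [pow_succ', Module.End.mul_apply, show i + (n + 1) = i + 1 + n by omega]
    simpa using add_mem h₁ (h.apply_choose_sub_mem i (by omega))

lemma pow_apply_choose_mem (h : IsApproxDifference hv p Ψ X b c) (hΨ : Ψ ∈ hv.raising b)
    (hi : i < p) (hn : i < n) : (Ψ ^ n) (Ring.choose X i) ∈ hv.filt (-(i * b) + n * b + c) := by
  obtain ⟨k, rfl⟩ := Nat.exists_eq_add_of_lt hn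
  have h₀ := h.pow_apply_choose_sub_mem hΨ (i := 0) (n := i) (by omega)
  rw [zero_add, Ring.choose_zero_right] at h₀
  have h₁ := hv.apply_mem_filt (hv.pow_mem_raising hΨ (k + 1)) h₀
    (k := -(i * b) + (i + k + 1 : ℕ) * b + c) (by push_cast; linarith)
  have hone : (Ψ ^ (k + 1)) 1 = 0 := by rw [pow_succ, Module.End.mul_apply, h.apply_one, map_zero]
  rwa [map_sub, hone, sub_zero, ← Module.End.mul_apply, ← pow_add,
    show k + 1 + i = i + k + 1 by omega] at h₁

lemma truncPow_apply_choose_sub_mem [CharZero K] {f : ℤ} {μ : K}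
    (h : IsApproxDifference hv p Ψ X b c) (hp : p.Prime)
    (hp1 : (p : L) ∈ hv.filt 1) (hΨ : Ψ ∈ hv.raising b) (hf : 0 ≤ f) (hfb : f ≤ b)
    (hμ : algebraMap K L μ ∈ hv.filt (f - b)) (hi : i < p) :
    truncPow p μ Ψ (Ring.choose X i) - Ring.choose (X + algebraMap K L μ) i ∈
      hv.filt (-(i * b) + f + c) := by
  have hcoeff {n : ℕ} (hn : n < p) := hv.algebraMap_ringChoose_mem_filt hp hp1 hμ (by omega) hn
  have hfn {n : ℕ} (hn : 1 ≤ n) : f ≤ n * f := le_mul_of_one_le_left hf (by exact_mod_cast hn)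
  simp only [truncPow, LinearMap.sum_apply, LinearMap.smul_apply,
    algebra_compatible_smul L (Ring.choose μ _), smul_eq_mul]
  rw [← sum_range_add_sum_Ico _ (Nat.succ_le_of_lt hi), add_comm X, ringChoose_add,
    add_sub_right_comm, ← sum_sub_distrib]
  refine add_mem (sum_mem fun n hn => ?_) (sum_mem fun n hn => ?_)
  · obtain ⟨k, rfl⟩ := Nat.exists_eq_add_of_le' (Nat.lt_succ_iff.1 (mem_range.1 hn))
    rw [← Ring.map_choose, ← mul_sub, Nat.add_sub_cancel]
    rcases Nat.eq_zero_or_pos n with rfl | hn0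
    · simp
    refine hv.mul_mem_filt (hcoeff (by omega)) (h.pow_apply_choose_sub_mem hΨ hi) ?_
    push_cast
    linarith [hfn hn0]
  · obtain ⟨hin, hnp⟩ := mem_Ico.1 hn
    refine hv.mul_mem_filt (hcoeff hnp) (h.pow_apply_choose_mem hΨ hi (by omega)) ?_
    linarith [hfn (n := n) (by omega)]

end IsApproxDifference

namespace IsDiscVal

variable [CharZero K] [CharZero L] {v : L → ℤ} {p : ℕ} {b f g E G : ℤ} {μ : K}
  {S Ψ Ψ₁ Ψ₂ : Module.End K L}

lemma exists_truncPow_eq_one_add_mul (hv : IsDiscVal v) (hp : p.Prime)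
    (hp1 : (p : L) ∈ hv.filt 1) (hf : 0 ≤ f) (hfb : f ≤ b)
    (hμ : algebraMap K L μ ∈ hv.filt (f - b)) (hΨ : Ψ ∈ hv.raising b) :
    ∃ W ∈ hv.raising (f - b), Commute Ψ W ∧ truncPow p μ Ψ = 1 + Ψ * W := by
  refine ⟨∑ i ∈ range (p - 1), Ring.choose μ (i + 1) • Ψ ^ i, sum_mem fun i hi => ?_,
    Commute.sum_right _ _ _ fun i _ => (Commute.self_pow Ψ i).smul_right _, ?_⟩
  · rw [mem_range] at hi
    refine hv.smul_mem_raising (hv.algebraMap_ringChoose_mem_filt hp hp1 hμ (by omega)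
      (by omega)) (hv.pow_mem_raising hΨ i) ?_
    push_cast
    nlinarith
  · rw [truncPow, ← Nat.sub_add_cancel hp.one_le, sum_range_succ', mul_sum, add_comm]
    simp [pow_succ']

lemma truncPow_pow_prime_sub_one_mem_raising (hv : IsDiscVal v) (hp : p.Prime)
    (hE : (p : L) ∈ hv.filt E) (hE1 : 1 ≤ E) (hf : 0 ≤ f) (hfb : f ≤ b)
    (hμ : algebraMap K L μ ∈ hv.filt (f - b)) (hΨ : Ψ ∈ hv.raising b) (h1 : (1 + Ψ) ^ p = 1)
    (hGE : G ≤ E) (hG : G ≤ E + b + p * (f - b)) : truncPow p μ Ψ ^ p - 1 ∈ hv.raising G := by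
  obtain ⟨W, hW, hΨW, hU⟩ :=
    hv.exists_truncPow_eq_one_add_mul hp (hv.filt_mono hE1 hE) hf hfb hμ hΨ
  have hbinom := hv.one_add_pow_prime_sub_mem_raising hp hE hf
    (hv.mul_mem_raising (k := f) hΨ hW (by omega))
  have hpow : (Ψ * W) ^ p ∈ hv.raising G := by
    rw [hΨW.mul_pow]
    exact hv.mul_mem_raising (hv.pow_prime_mem_raising_of_one_add_pow_eq_one hp hE (by omega) hΨ h1)
      (hv.pow_mem_raising hW p) hG
  rw [hU, ← sub_add_cancel ((1 + Ψ * W) ^ p - 1) ((Ψ * W) ^ p)]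
  exact add_mem (hv.raising_mono (by omega) hbinom) hpow

lemma pow_prime_sub_mem_raising (hv : IsDiscVal v) (hp : p.Prime)
    (hE : (p : L) ∈ hv.filt E) (hE1 : 1 ≤ E) (hf : 0 ≤ f) (hfb : f ≤ b)
    (hμ : algebraMap K L μ ∈ hv.filt (f - b)) (hΨ₂ : Ψ₂ ∈ hv.raising b)
    (h1 : (1 + Ψ₂) ^ p = 1) (hS : S ^ p = 1 + Ψ₂) (hΨ₁ : Ψ₁ = S * truncPow p μ Ψ₂ - 1)
    (hg : 0 ≤ g) (hΨ₁g : Ψ₁ ∈ hv.raising g) (hGE : G ≤ E) (hG : G ≤ E + b + p * (f - b)) :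
    Ψ₁ ^ p - Ψ₂ ∈ hv.raising G := by
  have hSΨ₂ : Commute S Ψ₂ := by
    rw [eq_sub_of_add_eq' hS.symm]
    exact (Commute.self_pow S p).sub_right (Commute.one_right S)
  have hpow : (1 + Ψ₁) ^ p = (1 + Ψ₂) * truncPow p μ Ψ₂ ^ p := by
    rw [hΨ₁, add_sub_cancel, (commute_truncPow hSΨ₂ p μ).mul_pow, hS]
  have hU := hv.truncPow_pow_prime_sub_one_mem_raising hp hE hE1 hf hfb hμ hΨ₂ h1 hGE hG
  have hbinom := hv.one_add_pow_prime_sub_mem_raising hp hE hg hΨ₁g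
  have hone_add : 1 + Ψ₂ ∈ hv.raising 0 :=
    add_mem (SetLike.one_mem_graded _) (hv.raising_mono (by omega) hΨ₂)
  have hsplit : Ψ₁ ^ p - Ψ₂ =
      (1 + Ψ₂) * (truncPow p μ Ψ₂ ^ p - 1) - ((1 + Ψ₁) ^ p - 1 - Ψ₁ ^ p) := by
    rw [hpow, mul_sub, mul_one]
    abel
  rw [hsplit]
  exact sub_mem (hv.mul_mem_raising hone_add hU (by omega)) (hv.raising_mono (by omega) hbinom)

end IsDiscVal

end TruncatedPower

section TwoGenerators

variable {K L : Type*} [Field K] [Field L] [Algebra K L]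

lemma apply_pow_mul_of_commute {T : Module.End K L} {x : L}
    (h : Commute T (LinearMap.mulLeft K x)) (j : ℕ) (y : L) : T (x ^ j * y) = x ^ j * T y := by
  simpa [LinearMap.pow_mulLeft] using LinearMap.congr_fun (h.pow_right j).eq y

lemma IsDiscVal.pow_sub_pow_mem_filt {v : L → ℤ} (hv : IsDiscVal v) {b c : ℤ} {x y : L}
    (hx : x ∈ hv.filt b) (hy : y ∈ hv.filt b) (hxy : x - y ∈ hv.filt c) (n : ℕ) :
    x ^ n - y ^ n ∈ hv.filt (n * b - b + c) := by
  rw [← (Commute.all x y).geom_sum₂_mul]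
  refine hv.mul_mem_filt (m := n * b - b) (sum_mem fun i hi => ?_) hxy le_rfl
  rw [mem_range] at hi
  obtain ⟨k, rfl⟩ := Nat.exists_eq_add_of_lt hi
  rw [show i + k + 1 - 1 - i = k by omega]
  exact hv.mul_mem_filt (hv.pow_mem_filt hx i) (hv.pow_mem_filt hy k) (by push_cast; linarith)

namespace IsTotallyRamified

variable [CharZero L] {vK : K → ℤ} {vL : L → ℤ} {p : ℕ} {b₁ b₂ c : ℤ} {x X : L}

lemma isAdapted_pow_mul_choose (h : IsTotallyRamified vK vL) (hp : p.Prime)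
    (hfr : Module.finrank K L = p ^ 2) (hp1 : (p : L) ∈ h.isDiscVal.filt 1)
    (hb₁ : ¬ (p : ℤ) ∣ b₁) (hb₂ : ¬ (p : ℤ) ∣ b₂) (hb₂pos : 0 < b₂)
    (hx0 : x ≠ 0) (hx : vL x = -(p * b₁)) (hX0 : X ≠ 0) (hX : vL X = -b₂) :
    IsAdapted K vL fun i : Fin p × Fin p => x ^ (i.2 : ℕ) * Ring.choose X (i.1 : ℕ) := by
  have hval (i : Fin p × Fin p) := h.isDiscVal.ringChoose_ne_zero_and_map_eq hp hp1 hX0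
    (by omega) i.1.2
  have hp0 : (p : ℤ) ≠ 0 := by exact_mod_cast hp.ne_zero
  have digit {b : ℤ} (hb : ¬ (p : ℤ) ∣ b) {s t : Fin p} (hst : (p : ℤ) ∣ b * (t - s)) : s = t := by
    have := Int.eq_zero_of_abs_lt_dvd
      (((Nat.prime_iff_prime_int.1 hp).dvd_or_dvd hst).resolve_left hb) (by rw [abs_lt]; omega)
    omega
  refine
    { card_eq := by simp [hfr, sq]
      ne_zero := fun i => mul_ne_zero (pow_ne_zero _ hx0) (hval i).1
      eq_of_modEq := ?_ }
  rintro ⟨i, j⟩ ⟨i', j'⟩ hmod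
  rw [h.isDiscVal.map_mul _ _ (pow_ne_zero _ hx0) (hval _).1, (hval _).2,
    h.isDiscVal.map_mul _ _ (pow_ne_zero _ hx0) (hval _).1, (hval _).2, h.isDiscVal.map_pow hx0,
    h.isDiscVal.map_pow hx0, hx, hX, hfr, Int.modEq_iff_dvd] at hmod
  obtain ⟨q, hq⟩ := hmod
  push_cast at hq
  obtain rfl : i = i' := digit hb₂ ⟨-(p * q) - b₁ * (j' - j), by linear_combination -hq⟩
  obtain rfl : j = j' := digit hb₁ ⟨-q, mul_left_cancel₀ hp0 (by linear_combination -hq)⟩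
  rfl

lemma mem_raising_of_pow_mul_choose [FiniteDimensional K L] (h : IsTotallyRamified vK vL)
    (hp : p.Prime) (hfr : Module.finrank K L = p ^ 2) (hp1 : (p : L) ∈ h.isDiscVal.filt 1)
    (hb₁ : ¬ (p : ℤ) ∣ b₁) (hb₂ : ¬ (p : ℤ) ∣ b₂) (hb₂pos : 0 < b₂)
    (hx0 : x ≠ 0) (hx : vL x = -(p * b₁)) (hX0 : X ≠ 0) (hX : vL X = -b₂) {T : Module.End K L}
    (hT : ∀ i j : ℕ, i < p →
      T (x ^ j * Ring.choose X i) ∈ h.isDiscVal.filt (-(j * (p * b₁)) - i * b₂ + c)) :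
    T ∈ h.isDiscVal.raising c := by
  refine h.mem_raising_of_isAdapted
    (h.isAdapted_pow_mul_choose hp hfr hp1 hb₁ hb₂ hb₂pos hx0 hx hX0 hX) fun i => ?_
  obtain ⟨hi0, hiv⟩ := h.isDiscVal.ringChoose_ne_zero_and_map_eq hp hp1 hX0 (by omega) i.1.2
  rw [h.isDiscVal.map_mul _ _ (pow_ne_zero _ hx0) hi0, hiv, h.isDiscVal.map_pow hx0, hx, hX]
  exact h.isDiscVal.filt_mono (by linarith) (hT _ _ i.1.2)

end IsTotallyRamified

namespace IsApproxDifference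

variable [CharZero L] {v : L → ℤ} {hv : IsDiscVal v} {p i : ℕ} {a b c f g : ℤ} {x X : L}
  {Ψ : Module.End K L}

lemma apply_pow_mul_choose_mem (h : IsApproxDifference hv p Ψ X b c) (hp : p.Prime)
    (hp1 : (p : L) ∈ hv.filt 1) (hb : 0 ≤ b) (hc : 0 ≤ c) (hX : X ∈ hv.filt (-b))
    (hx : x ∈ hv.filt (-a)) (hΨx : Commute Ψ (LinearMap.mulLeft K x)) (j : ℕ) (hi : i < p) :
    Ψ (x ^ j * Ring.choose X i) ∈ hv.filt (-(j * a) - i * b + b) := by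
  rw [apply_pow_mul_of_commute hΨx]
  exact hv.mul_mem_filt (hv.pow_mem_filt hx j) (h.apply_choose_mem hp hp1 hb hc hX hi)
    (by linarith)

variable [CharZero K] {μ : K} {σ : L ≃ₐ[K] L}

lemma algEquiv_truncPow_apply_choose_sub_mem (h : IsApproxDifference hv p Ψ X b c) (hp : p.Prime)
    (hp1 : (p : L) ∈ hv.filt 1) (hΨ : Ψ ∈ hv.raising b) (hf : 0 ≤ f) (hfb : f ≤ b)
    (hμ : algebraMap K L μ ∈ hv.filt (f - b)) (hg : 0 ≤ g) (hgfc : g ≤ f + c)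
    (hσ : σ.toLinearMap ∈ hv.raising 0) (hX : X ∈ hv.filt (-b))
    (hσX : σ X + algebraMap K L μ - X ∈ hv.filt (-b + g)) (hi : i < p) :
    σ (truncPow p μ Ψ (Ring.choose X i)) - Ring.choose X i ∈ hv.filt (-(i * b) + g) := by
  have hU := hv.apply_mem_filt hσ (h.truncPow_apply_choose_sub_mem hp hp1 hΨ hf hfb hμ hi)
    (k := -(i * b) + g) (by linarith)
  have hshift := hv.ringChoose_add_sub_mem_filt hp hp1 (by omega) (by omega) hX hσX hi
  rw [add_sub_cancel] at hshift
  rw [AlgEquiv.toLinearMap_apply, map_sub,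
    Ring.map_choose σ (X + algebraMap K L μ),
    map_add, AlgEquiv.commutes] at hU
  simpa using add_mem hU (hv.filt_mono (by linarith) hshift)

lemma mul_truncPow_sub_one_apply_mem (h : IsApproxDifference hv p Ψ X b c) (hp : p.Prime)
    (hp1 : (p : L) ∈ hv.filt 1) (hΨ : Ψ ∈ hv.raising b) (hf : 0 ≤ f) (hfb : f ≤ b)
    (hμ : algebraMap K L μ ∈ hv.filt (f - b)) (hg : 0 ≤ g) (hgfc : g ≤ f + c)
    (hσ : σ.toLinearMap ∈ hv.raising 0) (hX : X ∈ hv.filt (-b))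
    (hσX : σ X + algebraMap K L μ - X ∈ hv.filt (-b + g)) (hx : x ∈ hv.filt (-g))
    (hσx : σ x - x ∈ hv.filt 0) (hΨx : Commute Ψ (LinearMap.mulLeft K x)) (j : ℕ) (hi : i < p) :
    (σ.toLinearMap * truncPow p μ Ψ - 1) (x ^ j * Ring.choose X i) ∈
      hv.filt (-(j * g) - i * b + g) := by
  have hσx_mem : σ x ∈ hv.filt (-g) := hv.apply_mem_filt hσ hx (by omega)
  have hchoose := h.algEquiv_truncPow_apply_choose_sub_mem hp hp1 hΨ hf hfb hμ hg hgfc hσ hX hσX hi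
  have hpow := hv.pow_sub_pow_mem_filt hσx_mem hx hσx j
  have hsplit : (σ.toLinearMap * truncPow p μ Ψ - 1) (x ^ j * Ring.choose X i) =
      σ x ^ j * (σ (truncPow p μ Ψ (Ring.choose X i)) - Ring.choose X i) +
        (σ x ^ j - x ^ j) * Ring.choose X i := by
    rw [LinearMap.sub_apply, Module.End.mul_apply, Module.End.one_apply,
      apply_pow_mul_of_commute (commute_truncPow hΨx.symm p μ).symm, AlgEquiv.toLinearMap_apply,
      map_mul, map_pow]
    ring
  rw [hsplit]
  exact add_mem (hv.mul_mem_filt (hv.pow_mem_filt hσx_mem j) hchoose (by linarith))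
    (hv.mul_mem_filt hpow (hv.ringChoose_mem_filt hp hp1 (by omega) hX hi) (by linarith))

end IsApproxDifference

end TwoGenerators

section ArtinSchreier

variable {K L : Type*} [Field K] [Field L] [Algebra K L] {v : L → ℤ} {p : ℕ} {b c e E : ℤ}
  {σ : L ≃ₐ[K] L} {x y : L}

lemma algEquiv_pow_apply_sub_eq_sum (σ : L ≃ₐ[K] L) (y : L) (n : ℕ) :
    (σ ^ n) y - y = ∑ i ∈ range n, (σ ^ i) (σ y - y) := by
  simpa [pow_succ, -AlgEquiv.coe_pow] using (sum_range_sub (fun i => (σ ^ i) y) n).symm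

namespace IsDiscVal

lemma pow_algEquiv_mem_filt (hv : IsDiscVal v) (hσ : σ.toLinearMap ∈ hv.raising 0) (i : ℕ)
    (hx : x ∈ hv.filt c) : (σ ^ i) x ∈ hv.filt c := by
  have h := hv.pow_mem_raising hσ i
  rw [← AlgEquiv.pow_toLinearMap] at h
  exact hv.apply_mem_filt h hx (by omega)

lemma pow_apply_sub_mem_filt_one (hv : IsDiscVal v) (hp1 : (p : L) ∈ hv.filt 1)
    (hσ : σ.toLinearMap ∈ hv.raising 0) (hσx : σ x - x - 1 ∈ hv.filt 1) :
    (σ ^ p) x - x ∈ hv.filt 1 := by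
  have h : (σ ^ p) x - x = ∑ i ∈ range p, (σ ^ i) (σ x - x - 1) + p := by
    rw [algEquiv_pow_apply_sub_eq_sum]
    simp [-AlgEquiv.coe_pow, sum_sub_distrib]
  rw [h]
  exact add_mem (sum_mem fun i _ => hv.pow_algEquiv_mem_filt hσ i hσx) hp1

variable [CharZero L]

lemma pow_prime_apply_eq_self (hv : IsDiscVal v) (hp : p.Prime) (hE : (p : L) ∈ hv.filt E)
    (hb : 0 ≤ b) (hEb : (p - 1) * b + 1 ≤ E) (hσ : σ.toLinearMap ∈ hv.raising 0)
    (hx : x ∈ hv.filt (-b)) (hfix : σ (x ^ p - x) = x ^ p - x) (hσx : σ x - x - 1 ∈ hv.filt 1) :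
    (σ ^ p) x = x := by
  have hp2 : (2 : ℤ) ≤ p := by exact_mod_cast hp.two_le
  have hfix_pow : (σ ^ p) (x ^ p - x) = x ^ p - x := by
    simpa [hfix, sub_eq_zero, -AlgEquiv.coe_pow] using
      algEquiv_pow_apply_sub_eq_sum σ (x ^ p - x) p
  have hz := hv.pow_apply_sub_mem_filt_one (hv.filt_mono (by nlinarith) hE) hσ hσx
  obtain ⟨z, hσz⟩ : ∃ z, (σ ^ p) x = x + z := ⟨(σ ^ p) x - x, by ring⟩
  rw [hσz, add_sub_cancel_left] at hz
  have heq : z = z ^ p - p * wittD p x z := by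
    rw [map_sub, _root_.map_pow, hσz, add_pow_eq_sub_wittD hp.ne_zero] at hfix_pow
    linear_combination -hfix_pow
  have hz0 : z = 0 := hv.eq_zero_of_forall_mem_filt fun n =>
    hv.mem_filt_of_forall_succ hz fun k hk _ hzk => by
      rw [heq]
      exact sub_mem (hv.filt_mono (by nlinarith) (hv.pow_mem_filt hzk p))
        (hv.mul_mem_filt hE (hv.wittD_mem_filt hp hx hzk (c := k - (p - 1) * b) (by nlinarith)
          (by nlinarith)) (by omega))
  rw [hσz, hz0, add_zero]

lemma wittD_one_sub_mem_filt (hv : IsDiscVal v) (hp : p.Prime) (hE : v (p : L) = E)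
    (heb : (p - 1) * b + 1 ≤ e) (hb : 0 ≤ b) (heE : E + 1 ≤ p * e) (hy : y ∈ hv.filt (-b))
    (hxy : x + 1 - y ∈ hv.filt e) :
    wittD p x 1 - (1 + x ^ p - y ^ p) / p ∈ hv.filt 1 := by
  have hp2 : (2 : ℤ) ≤ p := by exact_mod_cast hp.two_le
  have hp0 : (p : L) ≠ 0 := Nat.cast_ne_zero.2 hp.ne_zero
  have cocycle : wittD p x 1 - (1 + x ^ p - y ^ p) / p =
      wittD p y (x + 1 - y) - (x + 1 - y) ^ p * (p : L)⁻¹ := by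
    simp only [wittD, add_sub_cancel, one_pow]
    field_simp
    ring
  have hpinv : (p : L)⁻¹ ∈ hv.filt (-E) := hv.mem_filt_of_le (by rw [hv.map_inv hp0, hE])
  have hbe : b + 1 ≤ e := by nlinarith
  have hee : e ≤ (p - 1) * e := le_mul_of_one_le_left (by omega) (by omega)
  rw [cocycle]
  exact sub_mem (hv.wittD_mem_filt hp hy hxy (by linarith) (by linarith))
    (hv.mul_mem_filt (hv.pow_mem_filt hxy p) hpinv (by linarith))

lemma pow_prime_apply_sub_sub_one_mem_filt_one (hv : IsDiscVal v) (hp : p.Prime)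
    (hE : v (p : L) = E) (heb : (p - 1) * b + 1 ≤ e) (hb : 0 ≤ b) (heE : E + 1 ≤ p * e)
    (hσ : σ.toLinearMap ∈ hv.raising 0) (hx : x ∈ hv.filt (-b)) (hσx : σ x - x - 1 ∈ hv.filt e)
    (hfix : (σ ^ p) x = x) (hσy : σ y - y - wittD p x 1 ∈ hv.filt 1) :
    (σ ^ p) y - y - 1 ∈ hv.filt 1 := by
  have hp0 : (p : L) ≠ 0 := Nat.cast_ne_zero.2 hp.ne_zero
  have htel : ∑ i ∈ range p, (1 + (σ ^ i) x ^ p - (σ ^ (i + 1)) x ^ p) / (p : L) = 1 := by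
    have h := sum_range_sub' (fun i => (σ ^ i) x ^ p) p
    rw [hfix, pow_zero, AlgEquiv.one_apply, sub_self] at h
    rw [← sum_div]
    simp only [add_sub_assoc, sum_add_distrib, h]
    simp [hp0]
  have hsum : (σ ^ p) y - y - 1 = ∑ i ∈ range p, ((σ ^ i) (σ y - y - wittD p x 1) +
      (wittD p ((σ ^ i) x) 1 - (1 + (σ ^ i) x ^ p - (σ ^ (i + 1)) x ^ p) / p)) := by
    conv_lhs => rw [algEquiv_pow_apply_sub_eq_sum, ← htel, ← sum_sub_distrib]
    refine sum_congr rfl fun i _ => ?_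
    rw [map_sub _ (σ y - y), map_wittD, _root_.map_one]
    ring
  rw [hsum]
  refine sum_mem fun i _ => add_mem (hv.pow_algEquiv_mem_filt hσ i hσy)
    (hv.wittD_one_sub_mem_filt hp hE heb hb heE (hv.pow_algEquiv_mem_filt hσ (i + 1) hx) ?_)
  have hε := neg_mem (hv.pow_algEquiv_mem_filt hσ i hσx)
  rw [map_sub, map_sub, _root_.map_one, ← AlgEquiv.mul_apply, ← pow_succ] at hε
  convert hε using 1
  ring

lemma apply_sub_sub_one_mem_filt (hv : IsDiscVal v) (hp : p.Prime) (hE : (p : L) ∈ hv.filt E)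
    (hE1 : 1 ≤ E) (hb : 0 ≤ b) (hy : y ∈ hv.filt (-b)) (hfix : σ (y ^ p - y) = y ^ p - y)
    (h1 : σ y - y - 1 ∈ hv.filt 1) : σ y - y - 1 ∈ hv.filt (E - (p - 1) * b) := by
  have hp2 : (2 : ℤ) ≤ p := by exact_mod_cast hp.two_le
  obtain ⟨η, hη⟩ : ∃ η, σ y = y + (1 + η) := ⟨σ y - y - 1, by ring⟩
  rw [show σ y - y - 1 = η by rw [hη]; ring] at h1 ⊢
  have heq : η = η ^ p - p * (wittD p 1 η + wittD p y (1 + η)) := by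
    rw [map_sub, _root_.map_pow, hη, add_pow_eq_sub_wittD hp.ne_zero,
      add_pow_eq_sub_wittD hp.ne_zero, one_pow] at hfix
    linear_combination -hfix
  have hone : (1 : L) ∈ hv.filt 0 := hv.one_mem_filt le_rfl
  have hyη := hv.wittD_mem_filt hp hy (add_mem hone (hv.filt_mono (by omega) h1))
    (c := -((p - 1) * b)) (by nlinarith) (by nlinarith)
  refine hv.mem_filt_of_forall_succ h1 fun k hk hkE hηk => ?_
  have h1η := hv.wittD_mem_filt hp hone hηk (c := k) (by nlinarith) (by nlinarith)
  rw [heq, mul_add]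
  exact sub_mem (hv.filt_mono (by nlinarith) (hv.pow_mem_filt hηk p))
    (add_mem (hv.mul_mem_filt hE h1η (by omega)) (hv.mul_mem_filt hE hyη (by omega)))

end IsDiscVal

end ArtinSchreier

section Scaffold

variable {K L : Type*} [Field K] [Field L] [Algebra K L]

/-- Two commuting operators whose monomials `Ψ₂ ^ s * Ψ₁ ^ t`, with `s, t < p`, behave like a
scaffold of precision `p ^ 2`: `Ψ₁` and `Ψ₂` raise valuations by `p * b₁` and `b₂`, a carry
`Ψ₁ ^ p` is worth one factor `Ψ₂`, and a monomial of total degree at least `p ^ 2` gains an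
additional `p ^ 2`. -/
structure IsScaffoldPair {v : L → ℤ} (hv : IsDiscVal v) (p : ℕ) (b₁ b₂ : ℤ)
    (Ψ₁ Ψ₂ : Module.End K L) : Prop where
  commute : Commute Ψ₁ Ψ₂
  lower_mem : Ψ₁ ∈ hv.raising (p * b₁)
  upper_mem : Ψ₂ ∈ hv.raising b₂
  lower_pow_mem : Ψ₁ ^ p ∈ hv.raising b₂
  upper_pow_mem : Ψ₂ ^ p ∈ hv.raising (p * b₂ + p ^ 2)
  upper_pow_mul_lower_pow_mem :
    Ψ₂ ^ (p - 1) * Ψ₁ ^ p ∈ hv.raising ((p - 1) * b₂ + p ^ 2 * b₁ + p ^ 2)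

/-- The operator `Ψ^(a) = Ψ₂ ^ a₁ * Ψ₁ ^ a₀` for `a = a₀ + p * a₁` with `a₀ < p`. -/
def scaffoldMonomial (p : ℕ) (Ψ₁ Ψ₂ : Module.End K L) (a : ℕ) : Module.End K L :=
  Ψ₂ ^ (a / p) * Ψ₁ ^ (a % p)

/-- The increase of valuation expected from `scaffoldMonomial p Ψ₁ Ψ₂ a`; in the notation of the
paper, it is `𝔟(a) - b₂`. -/
def scaffoldGain (p : ℕ) (b₁ b₂ : ℤ) (a : ℕ) : ℤ := (a / p : ℕ) * b₂ + (a % p : ℕ) * (p * b₁)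

namespace IsScaffoldPair

variable {v : L → ℤ} {hv : IsDiscVal v} {p s t j r : ℕ} {b₁ b₂ : ℤ} {Ψ₁ Ψ₂ : Module.End K L}

lemma pow_mul_pow_mem_raising (h : IsScaffoldPair hv p b₁ b₂ Ψ₁ Ψ₂) (s t : ℕ) :
    Ψ₂ ^ s * Ψ₁ ^ t ∈ hv.raising (s * b₂ + t * (p * b₁)) :=
  hv.mul_mem_raising (hv.pow_mem_raising h.upper_mem s) (hv.pow_mem_raising h.lower_mem t) le_rfl

lemma pow_mul_pow_add_mem_raising (h : IsScaffoldPair hv p b₁ b₂ Ψ₁ Ψ₂) (s t : ℕ) :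
    Ψ₂ ^ s * Ψ₁ ^ (p + t) ∈ hv.raising ((s + 1) * b₂ + t * (p * b₁)) := by
  rw [add_comm p, pow_add Ψ₁, ← mul_assoc (Ψ₂ ^ _)]
  exact hv.mul_mem_raising (h.pow_mul_pow_mem_raising s t) h.lower_pow_mem (by linarith)

lemma pow_add_mul_pow_mem_raising (h : IsScaffoldPair hv p b₁ b₂ Ψ₁ Ψ₂) (s t : ℕ) :
    Ψ₂ ^ (p + s) * Ψ₁ ^ t ∈ hv.raising ((p + s) * b₂ + t * (p * b₁) + p ^ 2) := by
  rw [pow_add, mul_assoc]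
  exact hv.mul_mem_raising h.upper_pow_mem (h.pow_mul_pow_mem_raising s t) (by linarith)

lemma pow_sub_one_mul_pow_add_mem_raising (h : IsScaffoldPair hv p b₁ b₂ Ψ₁ Ψ₂) (t : ℕ) :
    Ψ₂ ^ (p - 1) * Ψ₁ ^ (p + t) ∈
      hv.raising ((p - 1) * b₂ + (p + t) * (p * b₁) + p ^ 2) := by
  rw [pow_add Ψ₁, ← mul_assoc (Ψ₂ ^ _)]
  exact hv.mul_mem_raising h.upper_pow_mul_lower_pow_mem (hv.pow_mem_raising h.lower_mem t)
    (by linarith)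

lemma scaffoldMonomial_mul (h : IsScaffoldPair hv p b₁ b₂ Ψ₁ Ψ₂) (j r : ℕ) :
    scaffoldMonomial p Ψ₁ Ψ₂ j * scaffoldMonomial p Ψ₁ Ψ₂ r =
      Ψ₂ ^ (j / p + r / p) * Ψ₁ ^ (j % p + r % p) := by
  rw [scaffoldMonomial, scaffoldMonomial, pow_add, pow_add, mul_assoc, mul_assoc,
    ← mul_assoc (Ψ₁ ^ _), (h.commute.pow_pow _ _).eq, mul_assoc]

lemma scaffoldMonomial_mul_mem_raising (h : IsScaffoldPair hv p b₁ b₂ Ψ₁ Ψ₂) (hp : 0 < p)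
    (j r : ℕ) : scaffoldMonomial p Ψ₁ Ψ₂ j * scaffoldMonomial p Ψ₁ Ψ₂ r ∈
      hv.raising (scaffoldGain p b₁ b₂ (j + r)) := by
  rw [h.scaffoldMonomial_mul, scaffoldGain, Nat.add_div hp]
  split_ifs with hcarry
  · rw [← Nat.add_mod_add_of_le_add_mod hcarry, add_comm _ p]
    exact_mod_cast h.pow_mul_pow_add_mem_raising (j / p + r / p) ((j + r) % p)
  · rw [Nat.add_mod_of_add_mod_lt (not_le.1 hcarry)]
    exact h.pow_mul_pow_mem_raising _ _

lemma scaffoldMonomial_mul_mem_raising_of_sq_le (h : IsScaffoldPair hv p b₁ b₂ Ψ₁ Ψ₂)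
    (hp : 0 < p) (hjr : p ^ 2 ≤ j + r) :
    scaffoldMonomial p Ψ₁ Ψ₂ j * scaffoldMonomial p Ψ₁ Ψ₂ r ∈
      hv.raising (scaffoldGain p b₁ b₂ j + scaffoldGain p b₁ b₂ r + p ^ 2) := by
  rw [h.scaffoldMonomial_mul]
  have hdiv : p * p ≤ p * (j / p + r / p) + (j % p + r % p) := by
    linarith [Nat.div_add_mod j p, Nat.div_add_mod r p, sq p]
  have hmod : j % p + r % p < p + p := add_lt_add (Nat.mod_lt j hp) (Nat.mod_lt r hp)
  have hgain : scaffoldGain p b₁ b₂ j + scaffoldGain p b₁ b₂ r =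
      (j / p + r / p : ℕ) * b₂ + (j % p + r % p : ℕ) * (p * b₁) := by
    push_cast [scaffoldGain]
    ring
  rw [hgain]
  generalize j / p + r / p = s, j % p + r % p = t at *
  rcases le_or_gt p s with hs | hs
  · obtain ⟨k, rfl⟩ := Nat.exists_eq_add_of_le hs
    exact_mod_cast h.pow_add_mul_pow_mem_raising k t
  · obtain rfl : s = p - 1 := by
      have : p < s + 2 := lt_of_mul_lt_mul_left (by linarith : p * p < p * (s + 2)) hp.le
      omega
    have ht : p ≤ t := by
      rw [Nat.mul_sub, mul_one] at hdiv
      have := Nat.le_mul_self p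
      omega
    obtain ⟨k, rfl⟩ := Nat.exists_eq_add_of_le ht
    push_cast [Nat.cast_pred hp]
    exact h.pow_sub_one_mul_pow_add_mem_raising k

end IsScaffoldPair

/-- The integer `d_a = ⌊𝔟(a) / p ^ 2⌋` of the paper. -/
def scaffoldShift (p : ℕ) (b₁ b₂ : ℤ) (a : ℕ) : ℤ := (b₂ + scaffoldGain p b₁ b₂ a) / p ^ 2

lemma scaffoldShift_eq_fdiv (p : ℕ) (b₁ b₂ : ℤ) (a : ℕ) :
    scaffoldShift p b₁ b₂ a =
      Int.fdiv ((1 + ((a / p : ℕ) : ℤ)) * b₂ + ((a % p : ℕ) : ℤ) * p * b₁) (p ^ 2) := by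
  rw [Int.fdiv_eq_ediv_of_nonneg _ (sq_nonneg _), scaffoldShift, scaffoldGain]
  congr 1
  ring

lemma IsDiscVal.zpow_scaffoldShift_zero_mul_mem_filt {v : L → ℤ} (hv : IsDiscVal v) {p : ℕ}
    (b₁ : ℤ) {b₂ : ℤ} {ϖ ρ : L} (hϖ0 : ϖ ≠ 0) (hϖ : v ϖ = p ^ 2)
    (hρ : ρ ∈ hv.filt (b₂ % p ^ 2)) : ϖ ^ scaffoldShift p b₁ b₂ 0 * ρ ∈ hv.filt b₂ := by
  refine hv.mul_mem_filt (hv.mem_filt_of_le le_rfl) hρ ?_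
  rw [hv.map_zpow hϖ0, hϖ]
  simp [scaffoldShift, scaffoldGain, Int.ediv_mul_add_emod]

lemma mul_scaffoldShift_le {p : ℕ} (hp : 0 < p) (b₁ b₂ : ℤ) (a : ℕ) :
    p ^ 2 * scaffoldShift p b₁ b₂ a ≤ b₂ + scaffoldGain p b₁ b₂ a :=
  Int.mul_ediv_self_le (by positivity)

namespace IsScaffoldPair

variable {vL : L → ℤ} {hv : IsDiscVal vL} {p j : ℕ} {b₁ b₂ w : ℤ} {Ψ₁ Ψ₂ : Module.End K L}

lemma scaffoldMonomial_apply_mem_filt (h : IsScaffoldPair hv p b₁ b₂ Ψ₁ Ψ₂) (hp : 0 < p)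
    {ρ : L} (hρ : ρ ∈ hv.filt b₂) (hj : j < p ^ 2)
    (hw : ∀ a < p ^ 2 - j, w ≤ scaffoldShift p b₁ b₂ (j + a) - scaffoldShift p b₁ b₂ a) (r : ℕ) :
    scaffoldMonomial p Ψ₁ Ψ₂ j (scaffoldMonomial p Ψ₁ Ψ₂ r ρ) ∈
      hv.filt (p ^ 2 * (w + scaffoldShift p b₁ b₂ r)) := by
  have hp2 : (0 : ℤ) < p ^ 2 := by positivity
  rw [← Module.End.mul_apply]
  rcases lt_or_ge r (p ^ 2 - j) with hr | hr
  · refine hv.apply_mem_filt (h.scaffoldMonomial_mul_mem_raising hp j r) hρ ?_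
    have := mul_le_mul_of_nonneg_left (hw r hr) hp2.le
    linarith [mul_scaffoldShift_le hp b₁ b₂ (j + r)]
  · refine hv.apply_mem_filt
      (h.scaffoldMonomial_mul_mem_raising_of_sq_le hp (by omega)) hρ ?_
    have hw0 := mul_le_mul_of_nonneg_left (hw 0 (by omega)) hp2.le
    have hd0 : b₂ < p ^ 2 * scaffoldShift p b₁ b₂ 0 + p ^ 2 := by
      simpa [scaffoldShift, scaffoldGain] using Int.lt_mul_ediv_self_add (x := b₂) hp2
    rw [add_zero] at hw0
    linarith [mul_scaffoldShift_le hp b₁ b₂ j, mul_scaffoldShift_le hp b₁ b₂ r]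

lemma zpow_mul_apply_zpow_mul_mem_filt (h : IsScaffoldPair hv p b₁ b₂ Ψ₁ Ψ₂) (hp : 0 < p)
    {ϖ : K} (hϖ0 : ϖ ≠ 0) (hϖ : vL (algebraMap K L ϖ) = p ^ 2) {ρ : L} (hρ : ρ ∈ hv.filt b₂)
    (hj : j < p ^ 2)
    (hw : ∀ a < p ^ 2 - j, w ≤ scaffoldShift p b₁ b₂ (j + a) - scaffoldShift p b₁ b₂ a) (r : ℕ) :
    algebraMap K L (ϖ ^ (-w)) * scaffoldMonomial p Ψ₁ Ψ₂ j
      (algebraMap K L (ϖ ^ (-scaffoldShift p b₁ b₂ r)) * scaffoldMonomial p Ψ₁ Ψ₂ r ρ) ∈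
        hv.filt 0 := by
  have hϖL : algebraMap K L ϖ ≠ 0 := by simpa using hϖ0
  rw [← Algebra.smul_def, ← Algebra.smul_def, _root_.map_smul, smul_smul, ← zpow_add₀ hϖ0,
    Algebra.smul_def, map_zpow₀]
  refine hv.mul_mem_filt (hv.mem_filt_of_le le_rfl)
    (h.scaffoldMonomial_apply_mem_filt hp hρ hj hw r) ?_
  rw [hv.map_zpow hϖL, hϖ]
  linarith

end IsScaffoldPair

end Scaffold

section WittExtension

variable {K L : Type*} [Field K] [Field L] [Algebra K L]

/-- The operator `Ψ₂ = σ ^ p - 1`. -/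
noncomputable def upperScaffold (p : ℕ) (σ : L ≃ₐ[K] L) : Module.End K L :=
  (σ ^ p).toLinearMap - 1

/-- The operator `Ψ₁ = σ (1 + Ψ₂) ^ [μ] - 1`, where `[μ]` denotes the truncated binomial power. -/
noncomputable def lowerScaffold [CharZero K] (p : ℕ) (μ : K) (σ : L ≃ₐ[K] L) : Module.End K L :=
  σ.toLinearMap * truncPow p μ (upperScaffold p σ) - 1

lemma lowerScaffold_eq [CharZero K] (p : ℕ) (μ : K) (σ : L ≃ₐ[K] L) :
    lowerScaffold p μ σ = σ.toLinearMap * (∑ i ∈ range p,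
      ((∏ k ∈ range i, (μ - (k : K))) / (i.factorial : K)) • upperScaffold p σ ^ i) - 1 := by
  simp only [lowerScaffold, truncPow, ringChoose_eq_prod_div_factorial]

/-- `L / K` is a totally ramified extension of degree `p ^ 2` containing a solution `(x₁, x₂)` of
the Artin–Schreier–Witt equation of the vector `(a, μ ^ p * a)`, and the automorphism `σ` acts on
`(x₁, x₂)`, up to small errors, as the addition of the Witt vector `(1, 0)`. Here `e = v(p)`,
`b₁ = -v(a)`, `m = -v(μ)`, and `b₁`, `b₂` are the lower ramification numbers. -/
structure IsCyclicWittExtension (p : ℕ) (vK : K → ℤ) (vL : L → ℤ) (e m b₁ b₂ : ℤ) (a μ : K)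
    (x₁ x₂ : L) (σ : L ≃ₐ[K] L) : Prop where
  prime : p.Prime
  isTotallyRamified : IsTotallyRamified vK vL
  finrank_eq : Module.finrank K L = p ^ 2
  map_prime : vK (p : K) = e
  ne_zero : a ≠ 0
  map_eq : vK a = -b₁
  multiplier_ne_zero : μ ≠ 0
  map_multiplier : vK μ = -m
  upper_eq : b₂ = p ^ 2 * m + b₁
  not_dvd : ¬ (p : ℤ) ∣ b₁
  lower_pos : 0 < b₁
  lower_lt : (p ^ 2 - 1) * b₁ < p ^ 2 * m
  lt_prime : (p - 1) * m + b₁ < e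
  pow_sub_fst : x₁ ^ p - x₁ = algebraMap K L a
  pow_sub_snd : x₂ ^ p - x₂ = algebraMap K L (μ ^ p * a) + wittD p x₁ (algebraMap K L a)
  apply_fst_mem :
    σ x₁ - x₁ - 1 ∈ isTotallyRamified.isDiscVal.filt (p ^ 2 * e - p * (p - 1) * b₁)
  apply_snd_mem : σ x₂ - x₂ - wittD p x₁ 1 ∈ isTotallyRamified.isDiscVal.filt 1

namespace IsCyclicWittExtension

variable {p : ℕ} {vK : K → ℤ} {vL : L → ℤ} {e m b₁ b₂ : ℤ} {a μ : K} {x₁ x₂ : L}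
  {σ : L ≃ₐ[K] L}

lemma two_le (h : IsCyclicWittExtension p vK vL e m b₁ b₂ a μ x₁ x₂ σ) : (2 : ℤ) ≤ p := by
  exact_mod_cast h.prime.two_le

lemma sq_mul_lower_lt (h : IsCyclicWittExtension p vK vL e m b₁ b₂ a μ x₁ x₂ σ) :
    p ^ 2 * b₁ < b₂ := by
  linarith [h.lower_lt, h.upper_eq]

lemma le_sq_mul (h : IsCyclicWittExtension p vK vL e m b₁ b₂ a μ x₁ x₂ σ) :
    (p - 1) * b₂ + (p ^ 2 - p + 1) * b₁ + p ^ 2 ≤ p ^ 2 * e := by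
  have := mul_le_mul_of_nonneg_left (Int.add_one_le_of_lt h.lt_prime) (sq_nonneg (p : ℤ))
  rw [h.upper_eq]
  linarith

lemma lower_lt_prime (h : IsCyclicWittExtension p vK vL e m b₁ b₂ a μ x₁ x₂ σ) : b₁ < e := by
  have hp := h.two_le
  have hb : 0 < (p ^ 2 - 1) * b₁ := mul_pos (by nlinarith) h.lower_pos
  have hm : 0 < m := pos_of_mul_pos_right (hb.trans h.lower_lt) (sq_nonneg _)
  nlinarith [h.lt_prime]

lemma two_mul_lower_le (h : IsCyclicWittExtension p vK vL e m b₁ b₂ a μ x₁ x₂ σ) :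
    2 * b₁ ≤ p * b₁ :=
  mul_le_mul_of_nonneg_right h.two_le h.lower_pos.le

lemma two_mul_mul_lower_le (h : IsCyclicWittExtension p vK vL e m b₁ b₂ a μ x₁ x₂ σ) :
    2 * (p * b₁) ≤ p ^ 2 * b₁ := by
  nlinarith [h.two_mul_lower_le, h.two_le]

lemma two_mul_sq_mul_lower_le (h : IsCyclicWittExtension p vK vL e m b₁ b₂ a μ x₁ x₂ σ) :
    2 * (p ^ 2 * b₁) ≤ p ^ 3 * b₁ := by
  nlinarith [h.two_mul_mul_lower_le, h.two_le]

lemma cube_mul_lower_add_le (h : IsCyclicWittExtension p vK vL e m b₁ b₂ a μ x₁ x₂ σ) :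
    p ^ 3 * b₁ + p ^ 2 ≤ p ^ 2 * e + p * b₁ := by
  have := mul_le_mul_of_nonneg_left h.sq_mul_lower_lt.le (by linarith [h.two_le] : (0 : ℤ) ≤ p - 1)
  linarith [h.le_sq_mul, h.lower_pos]

lemma map_base (h : IsCyclicWittExtension p vK vL e m b₁ b₂ a μ x₁ x₂ σ) {y : K} (hy : y ≠ 0) :
    vL (algebraMap K L y) = p ^ 2 * vK y := by
  rw [h.isTotallyRamified.map_algebraMap y hy, h.finrank_eq, Nat.cast_pow]

lemma map_multiplier_algebraMap (h : IsCyclicWittExtension p vK vL e m b₁ b₂ a μ x₁ x₂ σ) :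
    vL (algebraMap K L μ) = b₁ - b₂ := by
  rw [h.map_base h.multiplier_ne_zero, h.map_multiplier, h.upper_eq]
  ring

lemma multiplier_mem_filt (h : IsCyclicWittExtension p vK vL e m b₁ b₂ a μ x₁ x₂ σ) :
    algebraMap K L μ ∈ h.isTotallyRamified.isDiscVal.filt (b₁ - b₂) :=
  h.isTotallyRamified.isDiscVal.mem_filt_of_le h.map_multiplier_algebraMap.ge

lemma map_coeff_algebraMap (h : IsCyclicWittExtension p vK vL e m b₁ b₂ a μ x₁ x₂ σ) :
    vL (algebraMap K L a) = p * -(p * b₁) := by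
  rw [h.map_base h.ne_zero, h.map_eq]
  ring

lemma ne_zero_and_map_fst (h : IsCyclicWittExtension p vK vL e m b₁ b₂ a μ x₁ x₂ σ) :
    x₁ ≠ 0 ∧ vL x₁ = -(p * b₁) := by
  refine h.isTotallyRamified.isDiscVal.ne_zero_and_map_eq_of_pow_sub h.prime.two_le
    (by linarith [h.two_mul_lower_le, h.lower_pos]) ?_ ?_
  · simpa [h.pow_sub_fst] using h.ne_zero
  · rw [h.pow_sub_fst, h.map_coeff_algebraMap]

lemma fst_mem_filt (h : IsCyclicWittExtension p vK vL e m b₁ b₂ a μ x₁ x₂ σ) :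
    x₁ ∈ h.isTotallyRamified.isDiscVal.filt (-(p * b₁)) :=
  h.isTotallyRamified.isDiscVal.mem_filt_of_le h.ne_zero_and_map_fst.2.ge

lemma multiplier_mul_fst_mem_filt (h : IsCyclicWittExtension p vK vL e m b₁ b₂ a μ x₁ x₂ σ) :
    algebraMap K L μ * x₁ ∈ h.isTotallyRamified.isDiscVal.filt (-(b₂ + (p - 1) * b₁)) :=
  h.isTotallyRamified.isDiscVal.mul_mem_filt h.multiplier_mem_filt h.fst_mem_filt (by linarith)

lemma apply_fst_sub_mem_filt (h : IsCyclicWittExtension p vK vL e m b₁ b₂ a μ x₁ x₂ σ) :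
    σ x₁ - x₁ ∈ h.isTotallyRamified.isDiscVal.filt 0 := by
  rw [← sub_add_cancel (σ x₁ - x₁) 1]
  exact add_mem (h.isTotallyRamified.isDiscVal.filt_mono
    (by linarith [h.cube_mul_lower_add_le, h.two_mul_sq_mul_lower_le, h.two_mul_mul_lower_le,
      h.lower_pos, h.two_mul_lower_le, sq_nonneg (p : ℤ)]) h.apply_fst_mem)
    (h.isTotallyRamified.isDiscVal.one_mem_filt le_rfl)

lemma map_natCast_prime [CharZero K]
    (h : IsCyclicWittExtension p vK vL e m b₁ b₂ a μ x₁ x₂ σ) :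
    vL (p : L) = p ^ 2 * e := by
  rw [← map_natCast (algebraMap K L), h.map_base (Nat.cast_ne_zero.2 h.prime.ne_zero),
    h.map_prime]

lemma natCast_prime_mem_filt [CharZero K]
    (h : IsCyclicWittExtension p vK vL e m b₁ b₂ a μ x₁ x₂ σ) :
    (p : L) ∈ h.isTotallyRamified.isDiscVal.filt (p ^ 2 * e) :=
  h.isTotallyRamified.isDiscVal.mem_filt_of_le h.map_natCast_prime.ge

lemma natCast_prime_mem_filt_one [CharZero K]
    (h : IsCyclicWittExtension p vK vL e m b₁ b₂ a μ x₁ x₂ σ) :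
    (p : L) ∈ h.isTotallyRamified.isDiscVal.filt 1 := by
  refine h.isTotallyRamified.isDiscVal.filt_mono ?_ h.natCast_prime_mem_filt
  nlinarith [h.two_le, h.lower_lt_prime, h.lower_pos]

lemma one_add_upperScaffold_pow_prime [FiniteDimensional K L] [IsGalois K L]
    (h : IsCyclicWittExtension p vK vL e m b₁ b₂ a μ x₁ x₂ σ) :
    (1 + upperScaffold p σ) ^ p = 1 := by
  have hσ : (σ ^ p) ^ p = 1 := by
    rw [← pow_mul, ← sq, ← h.finrank_eq, ← IsGalois.card_aut_eq_finrank, pow_card_eq_one']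
  rw [upperScaffold, add_sub_cancel, ← AlgEquiv.pow_toLinearMap, hσ]
  rfl

variable [CharZero L]

lemma wittD_mem_filt (h : IsCyclicWittExtension p vK vL e m b₁ b₂ a μ x₁ x₂ σ) :
    wittD p x₁ (algebraMap K L a) ∈ h.isTotallyRamified.isDiscVal.filt (-(p * b₂) + 1) := by
  have hb₂ := mul_le_mul_of_nonneg_left (Int.add_one_le_of_lt h.sq_mul_lower_lt)
    (by linarith [h.two_le] : (0 : ℤ) ≤ p)
  refine h.isTotallyRamified.isDiscVal.wittD_mem_filt h.prime h.fst_mem_filt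
    (h.isTotallyRamified.isDiscVal.mem_filt_of_le h.map_coeff_algebraMap.ge) ?_ ?_ <;>
  linarith [h.two_mul_sq_mul_lower_le, h.two_mul_mul_lower_le, h.two_mul_lower_le, h.two_le,
    h.lower_pos]

lemma snd_mem_filt (h : IsCyclicWittExtension p vK vL e m b₁ b₂ a μ x₁ x₂ σ) :
    x₂ ∈ h.isTotallyRamified.isDiscVal.filt (-(b₂ + (p - 1) * b₁)) := by
  have hv := h.isTotallyRamified.isDiscVal
  have hb := h.two_mul_lower_le
  refine hv.mem_filt_of_pow_sub_mem_filt h.prime.two_le ?_ ?_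
  · linarith [h.two_mul_mul_lower_le, h.sq_mul_lower_lt, h.lower_pos]
  rw [h.pow_sub_snd, map_mul, map_pow]
  refine add_mem (hv.mul_mem_filt (hv.pow_mem_filt h.multiplier_mem_filt p)
    (hv.mem_filt_of_le h.map_coeff_algebraMap.ge) (by linarith))
    (hv.filt_mono ?_ h.wittD_mem_filt)
  linarith [h.two_mul_mul_lower_le, h.lower_pos]

lemma pow_sub_snd_sub_mul_fst (h : IsCyclicWittExtension p vK vL e m b₁ b₂ a μ x₁ x₂ σ) :
    (x₂ - algebraMap K L μ * x₁) ^ p - (x₂ - algebraMap K L μ * x₁) =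
      -(algebraMap K L μ ^ p * x₁) + (wittD p x₁ (algebraMap K L a) + algebraMap K L μ * x₁ +
        p * wittD p (x₂ - algebraMap K L μ * x₁) (algebraMap K L μ * x₁)) := by
  have hadd := add_pow_eq_sub_wittD h.prime.ne_zero (x₂ - algebraMap K L μ * x₁)
    (algebraMap K L μ * x₁)
  have hsnd := h.pow_sub_snd
  rw [sub_add_cancel, mul_pow] at hadd
  rw [map_mul, map_pow] at hsnd
  linear_combination -hadd + hsnd - algebraMap K L μ ^ p * h.pow_sub_fst

lemma apply_snd_sub_mul_fst_mem_filt
    (h : IsCyclicWittExtension p vK vL e m b₁ b₂ a μ x₁ x₂ σ) :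
    σ (x₂ - algebraMap K L μ * x₁) + algebraMap K L μ - (x₂ - algebraMap K L μ * x₁) ∈
      h.isTotallyRamified.isDiscVal.filt (-b₂ + p * b₁) := by
  have hv := h.isTotallyRamified.isDiscVal
  have hwitt := hv.wittD_mem_filt h.prime h.fst_mem_filt (hv.one_mem_filt le_rfl)
    (c := -b₂ + p * b₁)
    (by linarith [h.sq_mul_lower_lt, h.two_mul_mul_lower_le, h.two_mul_lower_le, h.lower_pos])
    (by linarith [h.sq_mul_lower_lt, h.two_mul_mul_lower_le, h.two_mul_lower_le, h.lower_pos])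
  have hsplit : σ (x₂ - algebraMap K L μ * x₁) + algebraMap K L μ -
      (x₂ - algebraMap K L μ * x₁) =
      wittD p x₁ 1 + (σ x₂ - x₂ - wittD p x₁ 1) - algebraMap K L μ * (σ x₁ - x₁ - 1) := by
    rw [map_sub, map_mul, AlgEquiv.commutes]
    ring
  rw [hsplit]
  refine sub_mem (add_mem hwitt (hv.filt_mono ?_ h.apply_snd_mem))
    (hv.mul_mem_filt h.multiplier_mem_filt h.apply_fst_mem ?_) <;>
  linarith [h.sq_mul_lower_lt, h.two_mul_sq_mul_lower_le, h.two_mul_mul_lower_le,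
    h.two_mul_lower_le, h.lower_pos, h.cube_mul_lower_add_le, sq_nonneg (p : ℤ)]

variable [CharZero K]

/-- The correction `μ * x₁` is chosen to cancel the leading term of `x₂`, so that the valuation
becomes prime to `p`. -/
lemma ne_zero_and_map_snd_sub_mul_fst
    (h : IsCyclicWittExtension p vK vL e m b₁ b₂ a μ x₁ x₂ σ) :
    x₂ - algebraMap K L μ * x₁ ≠ 0 ∧ vL (x₂ - algebraMap K L μ * x₁) = -b₂ := by
  have hv := h.isTotallyRamified.isDiscVal
  have hb := h.two_mul_lower_le
  have hpb := h.two_mul_mul_lower_le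
  have hE := h.cube_mul_lower_add_le
  have hμ0 : algebraMap K L μ ^ p ≠ 0 := pow_ne_zero p (by simpa using h.multiplier_ne_zero)
  obtain ⟨hx₁0, hx₁⟩ := h.ne_zero_and_map_fst
  have hlead : vL (-(algebraMap K L μ ^ p * x₁)) = p * -b₂ := by
    rw [hv.map_neg (mul_ne_zero hμ0 hx₁0), hv.map_mul _ _ hμ0 hx₁0,
      hv.map_pow (by simpa using h.multiplier_ne_zero), h.map_multiplier_algebraMap, hx₁]
    ring
  have hb₂ := mul_le_mul_of_nonneg_right h.two_le
    (by linarith [h.sq_mul_lower_lt, h.lower_pos] : 0 ≤ b₂)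
  have hwitt : p * wittD p (x₂ - algebraMap K L μ * x₁) (algebraMap K L μ * x₁) ∈
      hv.filt (-(p * b₂) + 1) :=
    hv.mul_mem_filt h.natCast_prime_mem_filt (hv.wittD_mem_filt h.prime
      (sub_mem h.snd_mem_filt h.multiplier_mul_fst_mem_filt) h.multiplier_mul_fst_mem_filt
      (c := -(p * (b₂ + (p - 1) * b₁))) (by linarith) (by linarith))
      (by linarith [h.two_mul_sq_mul_lower_le, h.lower_pos, sq_nonneg (p : ℤ)])
  have hμx₁ : algebraMap K L μ * x₁ ∈ hv.filt (-(p * b₂) + 1) :=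
    hv.filt_mono (by linarith [h.sq_mul_lower_lt, h.lower_pos]) h.multiplier_mul_fst_mem_filt
  obtain ⟨h0, hval⟩ := hv.ne_zero_and_map_add_eq (neg_ne_zero.2 (mul_ne_zero hμ0 hx₁0))
    (y := wittD p x₁ (algebraMap K L a) + algebraMap K L μ * x₁ +
      p * wittD p (x₂ - algebraMap K L μ * x₁) (algebraMap K L μ * x₁))
    (by rw [hlead, mul_neg]; exact add_mem (add_mem h.wittD_mem_filt hμx₁) hwitt)
  rw [← h.pow_sub_snd_sub_mul_fst] at h0 hval
  exact hv.ne_zero_and_map_eq_of_pow_sub h.prime.two_le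
    (by linarith [h.sq_mul_lower_lt, h.lower_pos]) h0 (hval.trans hlead)

variable [FiniteDimensional K L]

lemma pow_prime_apply_fst (h : IsCyclicWittExtension p vK vL e m b₁ b₂ a μ x₁ x₂ σ) :
    (σ ^ p) x₁ = x₁ := by
  have hb := h.lower_pos
  have hpb := h.two_mul_lower_le
  have hppb := h.two_mul_mul_lower_le
  have hpppb := h.two_mul_sq_mul_lower_le
  have hE := h.cube_mul_lower_add_le
  have hv := h.isTotallyRamified.isDiscVal
  exact hv.pow_prime_apply_eq_self h.prime h.natCast_prime_mem_filt
    (by linarith) (by nlinarith [h.two_le]) (h.isTotallyRamified.algEquiv_mem_raising_zero σ)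
    h.fst_mem_filt (by rw [h.pow_sub_fst, AlgEquiv.commutes])
    (hv.filt_mono (by nlinarith [h.two_le]) h.apply_fst_mem)

lemma pow_prime_apply_snd_sub_sub_one_mem_filt_one
    (h : IsCyclicWittExtension p vK vL e m b₁ b₂ a μ x₁ x₂ σ) :
    (σ ^ p) x₂ - x₂ - 1 ∈ h.isTotallyRamified.isDiscVal.filt 1 := by
  have hgap : 1 ≤ p ^ 2 * ((p - 1) * (e - b₁)) := by
    have h₁ := mul_pos (by linarith [h.two_le] : (0 : ℤ) < p - 1) (sub_pos.2 h.lower_lt_prime)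
    nlinarith [h.two_le]
  refine h.isTotallyRamified.isDiscVal.pow_prime_apply_sub_sub_one_mem_filt_one h.prime
    h.map_natCast_prime ?_ ?_ (by linarith)
    (h.isTotallyRamified.algEquiv_mem_raising_zero σ) h.fst_mem_filt h.apply_fst_mem
    h.pow_prime_apply_fst h.apply_snd_mem <;>
  nlinarith [h.two_mul_sq_mul_lower_le, h.cube_mul_lower_add_le, h.two_mul_lower_le, h.two_le,
    h.lower_pos]

lemma pow_prime_apply_snd_sub_sub_one_mem_filt
    (h : IsCyclicWittExtension p vK vL e m b₁ b₂ a μ x₁ x₂ σ) :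
    (σ ^ p) x₂ - x₂ - 1 ∈ h.isTotallyRamified.isDiscVal.filt ((p - 1) * b₁) := by
  have hv := h.isTotallyRamified.isDiscVal
  have hp := h.two_le
  have hfix : (σ ^ p) (x₂ ^ p - x₂) = x₂ ^ p - x₂ := by
    rw [h.pow_sub_snd, map_add, map_wittD, h.pow_prime_apply_fst, AlgEquiv.commutes,
      AlgEquiv.commutes]
  refine hv.filt_mono (by linarith [h.le_sq_mul, h.lower_pos, sq_nonneg (p : ℤ)])
    (hv.apply_sub_sub_one_mem_filt h.prime h.natCast_prime_mem_filt ?_ ?_ h.snd_mem_filt hfix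
      h.pow_prime_apply_snd_sub_sub_one_mem_filt_one)
  · nlinarith [h.lower_pos, h.lower_lt_prime]
  · linarith [h.sq_mul_lower_lt, h.two_mul_lower_le, h.two_mul_mul_lower_le, h.lower_pos]

lemma isApproxDifference_upperScaffold
    (h : IsCyclicWittExtension p vK vL e m b₁ b₂ a μ x₁ x₂ σ) :
    IsApproxDifference h.isTotallyRamified.isDiscVal p (upperScaffold p σ)
      (x₂ - algebraMap K L μ * x₁) b₂ ((p - 1) * b₁) := by
  have hv := h.isTotallyRamified.isDiscVal
  refine hv.isApproxDifference_of_translation h.prime h.natCast_prime_mem_filt_one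
    (by linarith [h.sq_mul_lower_lt, h.two_mul_mul_lower_le, h.two_mul_lower_le, h.lower_pos])
    (by linarith [h.two_mul_lower_le, h.lower_pos])
    (hv.mem_filt_of_le h.ne_zero_and_map_snd_sub_mul_fst.2.ge) ?_
  rw [map_sub, map_mul, AlgEquiv.commutes, h.pow_prime_apply_fst, sub_sub_sub_cancel_right]
  exact h.pow_prime_apply_snd_sub_sub_one_mem_filt

lemma commute_upperScaffold_mulLeft_fst
    (h : IsCyclicWittExtension p vK vL e m b₁ b₂ a μ x₁ x₂ σ) :
    Commute (upperScaffold p σ) (LinearMap.mulLeft K x₁) := by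
  refine LinearMap.ext fun y => ?_
  simp [upperScaffold, h.pow_prime_apply_fst, mul_sub, -AlgEquiv.coe_pow]

lemma mem_raising_of_basis (h : IsCyclicWittExtension p vK vL e m b₁ b₂ a μ x₁ x₂ σ)
    {T : Module.End K L} {c : ℤ}
    (hT : ∀ i j : ℕ, i < p → T (x₁ ^ j * Ring.choose (x₂ - algebraMap K L μ * x₁) i) ∈
      h.isTotallyRamified.isDiscVal.filt (-(j * (p * b₁)) - i * b₂ + c)) :
    T ∈ h.isTotallyRamified.isDiscVal.raising c := by
  have hb₂ : ¬ (p : ℤ) ∣ b₂ := by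
    rw [h.upper_eq, dvd_add_right ((dvd_pow_self _ two_ne_zero).mul_right m)]
    exact h.not_dvd
  exact h.isTotallyRamified.mem_raising_of_pow_mul_choose h.prime h.finrank_eq
    h.natCast_prime_mem_filt_one h.not_dvd hb₂
    (by linarith [h.sq_mul_lower_lt, h.two_mul_mul_lower_le, h.two_mul_lower_le, h.lower_pos])
    h.ne_zero_and_map_fst.1 h.ne_zero_and_map_fst.2 h.ne_zero_and_map_snd_sub_mul_fst.1
    h.ne_zero_and_map_snd_sub_mul_fst.2 hT

lemma upperScaffold_mem_raising (h : IsCyclicWittExtension p vK vL e m b₁ b₂ a μ x₁ x₂ σ) :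
    upperScaffold p σ ∈ h.isTotallyRamified.isDiscVal.raising b₂ :=
  h.mem_raising_of_basis fun _ j hi =>
    h.isApproxDifference_upperScaffold.apply_pow_mul_choose_mem h.prime
      h.natCast_prime_mem_filt_one
      (by linarith [h.sq_mul_lower_lt, h.two_mul_mul_lower_le, h.two_mul_lower_le, h.lower_pos])
      (by linarith [h.two_mul_lower_le, h.lower_pos])
      (h.isTotallyRamified.isDiscVal.mem_filt_of_le h.ne_zero_and_map_snd_sub_mul_fst.2.ge)
      h.fst_mem_filt h.commute_upperScaffold_mulLeft_fst j hi

lemma lowerScaffold_mem_raising (h : IsCyclicWittExtension p vK vL e m b₁ b₂ a μ x₁ x₂ σ) :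
    lowerScaffold p μ σ ∈ h.isTotallyRamified.isDiscVal.raising (p * b₁) :=
  h.mem_raising_of_basis fun _ j hi =>
    h.isApproxDifference_upperScaffold.mul_truncPow_sub_one_apply_mem h.prime
      h.natCast_prime_mem_filt_one h.upperScaffold_mem_raising h.lower_pos.le
      (by linarith [h.sq_mul_lower_lt, h.two_mul_mul_lower_le, h.two_mul_lower_le, h.lower_pos])
      h.multiplier_mem_filt (by linarith [h.two_mul_lower_le, h.lower_pos]) (by linarith)
      (h.isTotallyRamified.algEquiv_mem_raising_zero σ)
      (h.isTotallyRamified.isDiscVal.mem_filt_of_le h.ne_zero_and_map_snd_sub_mul_fst.2.ge)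
      h.apply_snd_sub_mul_fst_mem_filt h.fst_mem_filt h.apply_fst_sub_mem_filt
      h.commute_upperScaffold_mulLeft_fst j hi

lemma upperScaffold_pow_prime_mem_raising [IsGalois K L]
    (h : IsCyclicWittExtension p vK vL e m b₁ b₂ a μ x₁ x₂ σ) :
    upperScaffold p σ ^ p ∈ h.isTotallyRamified.isDiscVal.raising (p ^ 2 * e + b₂) :=
  h.isTotallyRamified.isDiscVal.pow_prime_mem_raising_of_one_add_pow_eq_one h.prime
    h.natCast_prime_mem_filt
    (by linarith [h.sq_mul_lower_lt, h.two_mul_mul_lower_le, h.two_mul_lower_le, h.lower_pos])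
    h.upperScaffold_mem_raising h.one_add_upperScaffold_pow_prime

lemma lowerScaffold_pow_prime_sub_mem_raising [IsGalois K L]
    (h : IsCyclicWittExtension p vK vL e m b₁ b₂ a μ x₁ x₂ σ) :
    lowerScaffold p μ σ ^ p - upperScaffold p σ ∈
      h.isTotallyRamified.isDiscVal.raising (p ^ 2 * e - (p - 1) * b₂ + p * b₁) := by
  refine h.isTotallyRamified.isDiscVal.pow_prime_sub_mem_raising h.prime h.natCast_prime_mem_filt
    ?_ h.lower_pos.le ?_ h.multiplier_mem_filt h.upperScaffold_mem_raising
    h.one_add_upperScaffold_pow_prime (S := σ.toLinearMap) ?_ rfl ?_ h.lowerScaffold_mem_raising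
    ?_ (by linarith)
  · nlinarith [h.two_le, h.lower_lt_prime, h.lower_pos]
  · linarith [h.sq_mul_lower_lt, h.two_mul_mul_lower_le, h.two_mul_lower_le, h.lower_pos]
  · rw [upperScaffold, add_sub_cancel, AlgEquiv.pow_toLinearMap]
  · linarith [h.two_mul_lower_le, h.lower_pos]
  · nlinarith [h.sq_mul_lower_lt, h.two_mul_mul_lower_le, h.two_mul_lower_le, h.lower_pos, h.two_le]

lemma isScaffoldPair [IsGalois K L] (h : IsCyclicWittExtension p vK vL e m b₁ b₂ a μ x₁ x₂ σ)
    (hm : p * m ≤ e) :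
    IsScaffoldPair h.isTotallyRamified.isDiscVal p b₁ b₂ (lowerScaffold p μ σ)
      (upperScaffold p σ) := by
  have hv := h.isTotallyRamified.isDiscVal
  have hupper := h.upperScaffold_mem_raising
  have hupper_pow := h.upperScaffold_pow_prime_mem_raising
  have hdiff := h.lowerScaffold_pow_prime_sub_mem_raising
  have hE := h.le_sq_mul
  have hb₂ := h.sq_mul_lower_lt
  have hb := h.lower_pos
  have hpb := h.two_mul_lower_le
  have hppb := h.two_mul_mul_lower_le
  refine
    { commute := ?_
      lower_mem := h.lowerScaffold_mem_raising
      upper_mem := hupper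
      lower_pow_mem := ?_
      upper_pow_mem := hv.raising_mono (by linarith) hupper_pow
      upper_pow_mul_lower_pow_mem := ?_ }
  · have hσ : Commute σ.toLinearMap (upperScaffold p σ) := by
      rw [upperScaffold, AlgEquiv.pow_toLinearMap]
      exact (Commute.self_pow _ p).sub_right (Commute.one_right _)
    exact ((hσ.symm.mul_right (commute_truncPow rfl p μ)).sub_right (Commute.one_right _)).symm
  · rw [← sub_add_cancel (lowerScaffold p μ σ ^ p) (upperScaffold p σ)]
    refine add_mem (hv.raising_mono ?_ hdiff) hupper
    have := mul_le_mul_of_nonneg_left hm (sq_nonneg (p : ℤ))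
    rw [h.upper_eq]
    linarith
  · have hsplit : upperScaffold p σ ^ (p - 1) * lowerScaffold p μ σ ^ p = upperScaffold p σ ^ p +
        upperScaffold p σ ^ (p - 1) * (lowerScaffold p μ σ ^ p - upperScaffold p σ) := by
      rw [mul_sub, pow_sub_one_mul h.prime.ne_zero, add_sub_cancel]
    rw [hsplit]
    refine add_mem (hv.raising_mono ?_ hupper_pow)
      (hv.mul_mem_raising (hv.pow_mem_raising hupper (p - 1)) hdiff ?_)
    · linarith
    · rw [Nat.cast_pred h.prime.pos]
      linarith

end IsCyclicWittExtension

end WittExtension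

theorem statement16_general (p : ℕ) (hp : p.Prime)
    (K0 K2 : Type*) [Field K0] [Field K2] [CharZero K0] [CharZero K2]
    [Algebra K0 K2] [IsGalois K0 K2] [FiniteDimensional K0 K2]
    (hdeg : Module.finrank K0 K2 = p ^ 2)
    (v0 : K0 → ℤ) (v2 : K2 → ℤ) (hv0 : IsDiscVal v0) (hv2 : IsDiscVal v2)
    (e0 : ℤ) (he0 : e0 = v0 (p : K0))
    (hram : ∀ x : K0, x ≠ 0 → v2 (algebraMap K0 K2 x) = (p : ℤ) ^ 2 * v0 x)
    (a1 μ : K0) (ha1 : a1 ≠ 0) (hμ0 : μ ≠ 0)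
    (hnd : ¬ ((p : ℤ) ∣ v0 a1)) (hneg : v0 a1 < 0)
    (m : ℤ) (hm : m = -v0 μ)
    (hmu1 : (p : ℤ) ^ 2 * (p - 1) * m - (2 * p * (p - 1) + 1) * v0 a1 < (p : ℤ) ^ 2 * e0)
    (hmu2 : -(((p : ℤ) ^ 2 - 1) * v0 a1) < (p : ℤ) ^ 2 * m)
    (x1 x2 : K2)
    (hx1 : x1 ^ p - x1 = algebraMap K0 K2 a1)
    (hx2 : x2 ^ p - x2 = algebraMap K0 K2 (μ ^ p * a1) + wittD p x1 (algebraMap K0 K2 a1))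
    (b1 b2 : ℤ) (hb1 : b1 = -v0 a1) (hb2 : b2 = (p : ℤ) ^ 2 * m + b1)
    (σ1 : K2 ≃ₐ[K0] K2) (ε δ' : K2)
    (hσ1x1 : σ1 x1 = x1 + 1 + ε)
    (hε : ε = 0 ∨ (p : ℤ) ^ 2 * e0 - p * (p - 1) * b1 ≤ v2 ε)
    (hσ1x2 : σ1 x2 = x2 + (x1 ^ p + 1 - (x1 + 1) ^ p) / (p : K2) + δ')
    (hδ' : δ' = 0 ∨ 0 < v2 δ')
    (Ψ1 Ψ2 : Module.End K0 K2)
    (hΨ2 : Ψ2 = ((σ1 ^ p).toLinearMap : Module.End K0 K2) - 1)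
    (hΨ1 : Ψ1 = (σ1.toLinearMap : Module.End K0 K2) *
      (∑ i ∈ Finset.range p,
        ((∏ k ∈ Finset.range i, (μ - (k : K0))) / (Nat.factorial i : K0)) • Ψ2 ^ i) - 1)
    (π0 : K0) (hπ0 : π0 ≠ 0) (hπ0v : v0 π0 = 1)
    (ρ0 : K2) (hρ0 : ρ0 = 0 ∨ b2 % (p : ℤ) ^ 2 ≤ v2 ρ0)
    (d : ℕ → ℤ)
    (hd : ∀ a : ℕ, a < p ^ 2 →
      d a = Int.fdiv ((1 + ((a / p : ℕ) : ℤ)) * b2 + ((a % p : ℕ) : ℤ) * (p : ℤ) * b1)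
        ((p : ℤ) ^ 2))
    (Ψf : ℕ → Module.End K0 K2)
    (hΨf : ∀ a : ℕ, Ψf a = if a < p ^ 2 then Ψ2 ^ (a / p) * Ψ1 ^ (a % p) else 0)
    (ρ : K2) (hρ : ρ = algebraMap K0 K2 (π0 ^ d 0) * ρ0)
    (ρf : ℕ → K2) (hρf : ∀ a : ℕ, ρf a = algebraMap K0 K2 (π0 ^ (-d a)) * Ψf a ρ)
    (wj : ℕ → ℤ)
    (hwj : ∀ j : ℕ, j < p ^ 2 →
      IsLeast {x : ℤ | ∃ a : ℕ, a < p ^ 2 - j ∧ x = d (j + a) - d a} (wj j))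
    (hpm : p * m ≤ e0) :
    ∀ j r : ℕ, j < p ^ 2 → r < p ^ 2 →
      (algebraMap K0 K2 (π0 ^ (-wj j)) * Ψf j (ρf r) = 0 ∨
        0 ≤ v2 (algebraMap K0 K2 (π0 ^ (-wj j)) * Ψf j (ρf r))) := by
  have hext : IsCyclicWittExtension p v0 v2 e0 m b1 b2 a1 μ x1 x2 σ1 :=
    { prime := hp
      isTotallyRamified := ⟨hv0, hv2, fun x hx => by rw [hdeg, Nat.cast_pow, hram x hx]⟩
      finrank_eq := hdeg
      map_prime := he0.symm
      ne_zero := ha1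
      map_eq := by omega
      multiplier_ne_zero := hμ0
      map_multiplier := by omega
      upper_eq := hb2
      not_dvd := by rwa [hb1, dvd_neg]
      lower_pos := by omega
      lower_lt := by rw [hb1]; linarith
      lt_prime := by nlinarith [sq_nonneg ((p : ℤ) - 1), hp.pos]
      pow_sub_fst := hx1
      pow_sub_snd := hx2
      apply_fst_mem := by rwa [hσ1x1, show x1 + 1 + ε - x1 - 1 = ε by ring]
      apply_snd_mem := by
        rwa [hσ1x2, wittD, one_pow, add_assoc, add_sub_cancel_left, add_sub_cancel_left] }
  obtain rfl : Ψ2 = upperScaffold p σ1 := hΨ2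
  obtain rfl : Ψ1 = lowerScaffold p μ σ1 := hΨ1.trans (lowerScaffold_eq p μ σ1).symm
  have hshift (a : ℕ) (ha : a < p ^ 2) : d a = scaffoldShift p b1 b2 a :=
    (hd a ha).trans (scaffoldShift_eq_fdiv p b1 b2 a).symm
  have hπ0v2 : v2 (algebraMap K0 K2 π0) = p ^ 2 := by rw [hram π0 hπ0, hπ0v, mul_one]
  have hρmem : ρ ∈ hv2.filt b2 := by
    rw [hρ, map_zpow₀, hshift 0 (pow_pos hp.pos 2)]
    exact hv2.zpow_scaffoldShift_zero_mul_mem_filt b1 (by simpa using hπ0) hπ0v2 hρ0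
  intro j r hj hr
  rw [hρf, hΨf, hΨf, if_pos hj, if_pos hr, hshift r hr]
  refine (hext.isScaffoldPair hpm).zpow_mul_apply_zpow_mul_mem_filt hp.pos hπ0 hπ0v2 hρmem hj
    (fun a ha => ?_) r
  rw [← hshift (j + a) (by omega), ← hshift a (by omega)]
  exact (hwj j hj).2 ⟨a, ha, rfl⟩

/-- Proposition 4.3: if `p²e₀ − (p+1)b₂ + (p−1)b₁ > 0` then
`π₀^{−w_j}·Ψ^{(j)}·ρ_r ∈ 𝔒₂` for all `0 ≤ r, j < p²`. -/
theorem statement16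
    (p : ℕ) (hp : p.Prime)
    (K0 K2 : Type*) [Field K0] [Field K2] [CharZero K0] [CharZero K2]
    [Algebra K0 K2] [IsGalois K0 K2] [FiniteDimensional K0 K2]
    (hdeg : Module.finrank K0 K2 = p ^ 2)
    (hcyc : IsCyclic (K2 ≃ₐ[K0] K2))
    (v0 : K0 → ℤ) (v2 : K2 → ℤ)
    (hv0 : IsDiscVal v0) (hv2 : IsDiscVal v2)
    (e0 : ℤ) (he0 : e0 = v0 (p : K0)) (he0pos : 1 ≤ e0)
    (hram : ∀ x : K0, x ≠ 0 → v2 (algebraMap K0 K2 x) = (p : ℤ) ^ 2 * v0 x)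
    (a1 μ a2 : K0) (ha1 : a1 ≠ 0) (hμ0 : μ ≠ 0)
    (hwitt : ∀ y : K0, y ^ p - y ≠ a1)
    (hnd : ¬ ((p : ℤ) ∣ v0 a1))
    (hneg : v0 a1 < 0)
    (hbd : -((p : ℤ) * e0) < ((p : ℤ) ^ 2 - 1) * v0 a1)
    (m : ℤ) (hm : m = -v0 μ) (hmpos : 0 < m)
    (hmu1 : (p : ℤ) ^ 2 * (p - 1) * m - (2 * p * (p - 1) + 1) * v0 a1 < (p : ℤ) ^ 2 * e0)
    (hmu2 : -(((p : ℤ) ^ 2 - 1) * v0 a1) < (p : ℤ) ^ 2 * m)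
    (ha2 : a2 = μ ^ p * a1)
    (x1 x2 : K2)
    (hx1 : x1 ^ p - x1 = algebraMap K0 K2 a1)
    (hx2 : x2 ^ p - x2 = algebraMap K0 K2 a2 +
      (x1 ^ p + (algebraMap K0 K2 a1) ^ p - (x1 + algebraMap K0 K2 a1) ^ p) / (p : K2))
    (hgen : Algebra.adjoin K0 {x1, x2} = ⊤)
    (b1 b2 : ℤ) (hb1 : b1 = -v0 a1) (hb2 : b2 = (p : ℤ) ^ 2 * m + b1)
    (σ1 : K2 ≃ₐ[K0] K2) (ε δ' : K2)
    (hσ1x1 : σ1 x1 = x1 + 1 + ε)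
    (hε : ε ≠ 0) (hεv : v2 ε = (p : ℤ) ^ 2 * e0 - p * (p - 1) * b1)
    (hσ1x2 : σ1 x2 = x2 + (x1 ^ p + 1 - (x1 + 1) ^ p) / (p : K2) + δ')
    (hδ' : δ' = 0 ∨ 0 < v2 δ')
    (Ψ1 Ψ2 : Module.End K0 K2)
    (hΨ2 : Ψ2 = ((σ1 ^ p).toLinearMap : Module.End K0 K2) - 1)
    (hΨ1 : Ψ1 = (σ1.toLinearMap : Module.End K0 K2) *
      (∑ i ∈ Finset.range p,
        ((∏ k ∈ Finset.range i, (μ - (k : K0))) / (Nat.factorial i : K0)) • Ψ2 ^ i) - 1)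
    (π0 : K0) (hπ0 : π0 ≠ 0) (hπ0v : v0 π0 = 1)
    (ρ0 : K2) (hρ0 : ρ0 ≠ 0) (hρ0v : v2 ρ0 = b2 % (p : ℤ) ^ 2)
    (d : ℕ → ℤ)
    (hd : ∀ a : ℕ, a < p ^ 2 →
      d a = Int.fdiv ((1 + ((a / p : ℕ) : ℤ)) * b2 + ((a % p : ℕ) : ℤ) * (p : ℤ) * b1)
        ((p : ℤ) ^ 2))
    (Ψf : ℕ → Module.End K0 K2)
    (hΨf : ∀ a : ℕ, Ψf a = if a < p ^ 2 then Ψ2 ^ (a / p) * Ψ1 ^ (a % p) else 0)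
    (ρ : K2) (hρ : ρ = algebraMap K0 K2 (π0 ^ d 0) * ρ0)
    (ρf : ℕ → K2) (hρf : ∀ a : ℕ, ρf a = algebraMap K0 K2 (π0 ^ (-d a)) * Ψf a ρ)
    (wj : ℕ → ℤ)
    (hwj : ∀ j : ℕ, j < p ^ 2 →
      IsLeast {x : ℤ | ∃ a : ℕ, a < p ^ 2 - j ∧ x = d (j + a) - d a} (wj j))
    (hbig : 0 < (p : ℤ) ^ 2 * e0 - (p + 1) * b2 + (p - 1) * b1) :
    ∀ j r : ℕ, j < p ^ 2 → r < p ^ 2 →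
      (algebraMap K0 K2 (π0 ^ (-wj j)) * Ψf j (ρf r) = 0 ∨
        0 ≤ v2 (algebraMap K0 K2 (π0 ^ (-wj j)) * Ψf j (ρf r))) := by
  subst ha2
  exact statement16_general p hp K0 K2 hdeg v0 v2 hv0 hv2 e0 he0 hram a1 μ ha1 hμ0 hnd hneg m hm
    hmu1 hmu2 x1 x2 hx1 hx2 b1 b2 hb1 hb2 σ1 ε δ' hσ1x1 (.inr hεv.ge) hσ1x2 hδ' Ψ1 Ψ2 hΨ2 hΨ1
    π0 hπ0 hπ0v ρ0 (.inr hρ0v.ge) d hd Ψf hΨf ρ hρ ρf hρf wj hwj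
    (by nlinarith [hp.two_le, sq_nonneg (p : ℤ)])
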